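/- arXiv:2209.15394 — 7 statements merged into one kernel-verified Lean document; each statement's English description precedes it below -/
import Mathlib

section
/- Every nondegenerate dendrite is a topological fractal with witnessing number two, i.e., there exist two continuous self-maps f, g of the dendrite D such that {f, g} is topologically contractive and f(D) ∪ g(D) = D. -/
/-- A family `F` of self-maps of a metric space `X` is topologically contractive if for
every `ε > 0` there is `k` such that every composition of `k` maps from `F` has image of
diameter less than `ε`. -/
def TopContractive {X : Type*} [MetricSpace X] (F : Set (X → X)) : Prop :=
  ∀ ε > (0 : ℝ), ∃ k : ℕ, ∀ l : List (X → X), (∀ f ∈ l, f ∈ F) → l.length = k →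
    Metric.diam (Set.range (l.foldr (· ∘ ·) id)) < ε

open Set Filter Topology unitInterval

/-- Two points are `ε`-joined if they lie in a common preconnected set of diameter at most `ε`. -/
def SmallJoined {X : Type*} [MetricSpace X] (ε : ℝ) (x y : X) : Prop :=
  ∃ S : Set X, IsPreconnected S ∧ x ∈ S ∧ y ∈ S ∧ ∀ u ∈ S, ∀ v ∈ S, dist u v ≤ ε

namespace SmallJoined

variable {X : Type*} [MetricSpace X] {ε : ℝ} {x y : X}

theorem refl (hε : 0 ≤ ε) (x : X) : SmallJoined ε x x :=
  ⟨{x}, isPreconnected_singleton, rfl, rfl, by rintro u rfl v rfl; simpa using hε⟩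

theorem symm (h : SmallJoined ε x y) : SmallJoined ε y x :=
  let ⟨S, hS, hx, hy, hd⟩ := h
  ⟨S, hS, hy, hx, hd⟩

theorem dist_le (h : SmallJoined ε x y) : dist x y ≤ ε :=
  let ⟨_, _, hx, hy, hd⟩ := h
  hd _ hx _ hy

theorem eventually [LocallyConnectedSpace X] (hε : 0 < ε) (x : X) :
    ∀ᶠ y in 𝓝 x, SmallJoined ε x y := by
  obtain ⟨V, hV, hVc, hVb⟩ := locallyConnectedSpace_iff_connected_subsets.1 ‹_› x _
    (Metric.ball_mem_nhds x (half_pos hε))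
  filter_upwards [hV] with y hy
  refine ⟨V, hVc, mem_of_mem_nhds hV, hy, fun u hu v hv => ?_⟩
  have hu := Metric.mem_ball.1 (hVb hu)
  have hv := Metric.mem_ball.1 (hVb hv)
  linarith [dist_triangle_right u v x]

end SmallJoined

/-- A chain from `x` to `y` of `M` steps in the relation `R`, passing through `E` before its
last point. -/
def HasChain {X : Type*} (R : X → X → Prop) (E : Set X) (x y : X) (M : ℕ) : Prop :=
  ∃ z : ℕ → X, z 0 = x ∧ z M = y ∧ (∀ j < M, R (z j) (z (j + 1))) ∧ ∀ e ∈ E, ∃ j < M, z j = e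

namespace HasChain

variable {X : Type*} {R : X → X → Prop} {E : Set X} {x y y' : X}

theorem snoc {M : ℕ} (h : HasChain R E x y M) (hR : R y y') :
    HasChain R (insert y E) x y' (M + 1) := by
  obtain ⟨z, h0, hM, hz, hE⟩ := h
  refine ⟨fun j => if j ≤ M then z j else y', by simpa using h0, by simp, ?_, ?_⟩
  · intro j hj
    rcases Nat.lt_succ_iff_lt_or_eq.1 hj with hj | rfl
    · simpa [hj.le, Nat.succ_le_of_lt hj] using hz j hj
    · simpa [hM] using hR
  · rintro e (rfl | he)
    · exact ⟨M, by simp, by simpa using hM⟩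
    · obtain ⟨j, hj, rfl⟩ := hE e he
      exact ⟨j, by omega, by simp [hj.le]⟩

theorem mono {M : ℕ} {E' : Set X} (h : HasChain R E x y M) (hE : E' ⊆ E) :
    HasChain R E' x y M :=
  let ⟨z, h0, hM, hz, hz'⟩ := h
  ⟨z, h0, hM, hz, fun e he => hz' e (hE he)⟩

theorem eventually_snoc (h : ∀ᶠ M in atTop, HasChain R E x y M) (hR : R y y') :
    ∀ᶠ M in atTop, HasChain R (insert y E) x y' M := by
  obtain ⟨N, hN⟩ := eventually_atTop.1 h
  refine eventually_atTop.2 ⟨N + 1, fun M hM => ?_⟩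
  obtain ⟨M, rfl⟩ : ∃ m, M = m + 1 := ⟨M - 1, by omega⟩
  exact (hN M (by omega)).snoc hR

theorem eventually_trans (h : ∀ᶠ M in atTop, HasChain R E x y M)
    (hR : Relation.ReflTransGen R y y') : ∀ᶠ M in atTop, HasChain R E x y' M := by
  induction hR with
  | refl => exact h
  | tail _ hbc ih => exact (eventually_snoc ih hbc).mono fun M hM => hM.mono (subset_insert _ _)

theorem eventually_of_finite {s : Set X} (hs : s.Finite)
    (hrefl : ∀ u, Relation.ReflTransGen R x u → R u u)
    (hsymm : ∀ u v, R u v → R v u) (hE : ∀ e ∈ s, Relation.ReflTransGen R x e)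
    (hy : Relation.ReflTransGen R x y) :
    ∀ᶠ M in atTop, HasChain R s x y M := by
  induction s, hs using Set.Finite.induction_on generalizing y with
  | empty =>
    refine eventually_trans (Eventually.of_forall fun M => ?_) hy
    exact ⟨fun _ => x, rfl, rfl, fun _ _ => hrefl x .refl, by simp⟩
  | @insert e s _ _ ih =>
    have he := hE e (mem_insert _ _)
    refine eventually_trans (eventually_snoc (ih (fun e' h => hE e' (mem_insert_of_mem _ h)) he)
      (hrefl e he)) (.trans ?_ hy)
    have : Std.Symm R := ⟨hsymm⟩
    exact symm he

end HasChain

theorem SmallJoined.eventually_hasChain {X : Type*} [MetricSpace X] [LocallyConnectedSpace X]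
    {ε δ : ℝ} {x y : X} (h : SmallJoined ε x y) (hδ : 0 < δ) {E : Set X} (hE : E.Finite) :
    ∀ᶠ M in atTop, HasChain (fun u v => dist x u ≤ ε ∧ dist x v ≤ ε ∧ SmallJoined δ u v)
      {e ∈ E | SmallJoined ε x e} x y M := by
  set R : X → X → Prop := fun u v => dist x u ≤ ε ∧ dist x v ≤ ε ∧ SmallJoined δ u v with hR
  have hsymm : ∀ u v, R u v → R v u := fun u v h => ⟨h.2.1, h.1, h.2.2.symm⟩
  have hε : 0 ≤ ε := dist_nonneg.trans h.dist_le
  have key : ∀ w, SmallJoined ε x w → Relation.ReflTransGen R x w := by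
    rintro w ⟨S, hS, hx, hw, hd⟩
    refine hS.induction₂' (Relation.ReflTransGen R) (fun u hu => ?_)
      (fun _ _ _ _ _ _ => Relation.ReflTransGen.trans) hx hw
    filter_upwards [nhdsWithin_le_nhds (SmallJoined.eventually hδ u), self_mem_nhdsWithin]
      with v huv hv
    have : R u v := ⟨hd _ hx _ hu, hd _ hx _ hv, huv⟩
    exact ⟨.single this, .single (hsymm _ _ this)⟩
  refine HasChain.eventually_of_finite (hE.subset (sep_subset _ _)) ?_ hsymm
    (fun e he => key e he.2) (key y h)
  intro u hu
  suffices dist x u ≤ ε from ⟨this, this, .refl hδ.le u⟩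
  rcases Relation.ReflTransGen.cases_tail hu with rfl | ⟨v, -, hv⟩
  · simpa using hε
  · exact hv.2.1

/-- A walk of `N` steps, consecutive points being `ε`-joined, that is `ε`-dense in the sense of
`SmallJoined`. -/
structure IsWalk {X : Type*} [MetricSpace X] (ε : ℝ) (w : ℕ → X) (N : ℕ) : Prop where
  pos : 0 < N
  step : ∀ i < N, SmallJoined ε (w i) (w (i + 1))
  dense : ∀ y, ∃ i < N, SmallJoined ε (w i) y

theorem exists_finite_smallJoined {X : Type*} [MetricSpace X] [CompactSpace X]
    [LocallyConnectedSpace X] {δ : ℝ} (hδ : 0 < δ) :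
    ∃ E : Set X, E.Finite ∧ ∀ y, ∃ e ∈ E, SmallJoined δ e y := by
  obtain ⟨t, ht⟩ := CompactSpace.elim_nhds_subcover (fun x : X => {y | SmallJoined δ x y})
    (fun x => SmallJoined.eventually hδ x)
  refine ⟨t, t.finite_toSet, fun y => ?_⟩
  simpa using (ht ▸ mem_univ y : y ∈ ⋃ x ∈ t, {y | SmallJoined δ x y})

theorem IsWalk.exists_refinement {X : Type*} [MetricSpace X] [CompactSpace X]
    [LocallyConnectedSpace X] {ε δ : ℝ} {w : ℕ → X} {N : ℕ} (h : IsWalk ε w N) (hδ : 0 < δ) :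
    ∃ (w' : ℕ → X) (L : ℕ), IsWalk δ w' (N * L) ∧ 0 < L ∧ (∀ i ≤ N, w' (i * L) = w i) ∧
      ∀ j ≤ N * L, dist (w (j / L)) (w' j) ≤ ε := by
  obtain ⟨E, hEf, hE⟩ := exists_finite_smallJoined (X := X) hδ
  have hev : ∀ᶠ L in atTop, ∀ i ∈ Set.Iio N, HasChain
      (fun u v => dist (w i) u ≤ ε ∧ dist (w i) v ≤ ε ∧ SmallJoined δ u v)
      {e ∈ E | SmallJoined ε (w i) e} (w i) (w (i + 1)) L :=
    (eventually_all_finite (Set.finite_Iio N)).2 fun i hi => (h.step i hi).eventually_hasChain hδ hEf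
  obtain ⟨L, hL, hL0⟩ := (hev.and (eventually_gt_atTop 0)).exists
  have hL' : ∀ i, ∃ z : ℕ → X, z 0 = w i ∧ (i < N → z L = w (i + 1) ∧
      (∀ j < L, dist (w i) (z j) ≤ ε ∧ dist (w i) (z (j + 1)) ≤ ε ∧
        SmallJoined δ (z j) (z (j + 1))) ∧
      ∀ e ∈ {e ∈ E | SmallJoined ε (w i) e}, ∃ j < L, z j = e) := by
    intro i
    by_cases hi : i < N
    · obtain ⟨z, h0, h1, h2, h3⟩ := hL i hi
      exact ⟨z, h0, fun _ => ⟨h1, h2, h3⟩⟩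
    · exact ⟨fun _ => w i, rfl, fun h => absurd h hi⟩
  choose z hz0 hz using hL'
  have hval : ∀ i j, j < L → z ((i * L + j) / L) ((i * L + j) % L) = z i j := by
    intro i j hj
    rw [Nat.mul_add_mod', Nat.mod_eq_of_lt hj, Nat.add_comm, Nat.add_mul_div_right _ _ hL0,
      Nat.div_eq_of_lt hj, zero_add]
  have hε : 0 ≤ ε := dist_nonneg.trans (h.step 0 h.pos).dist_le
  refine ⟨fun j => z (j / L) (j % L), L, ⟨Nat.mul_pos h.pos hL0, ?_, ?_⟩, hL0, ?_, ?_⟩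
  · intro j hj
    obtain ⟨i, k, hk, rfl⟩ : ∃ i k, k < L ∧ j = i * L + k :=
      ⟨j / L, j % L, Nat.mod_lt _ hL0, (Nat.div_add_mod' j L).symm⟩
    have hi : i < N := by
      by_contra! hi
      have := Nat.mul_le_mul_right L hi
      omega
    rw [hval i k hk]
    have hs := ((hz i hi).2.1 k hk).2.2
    rcases (Nat.succ_le_of_lt hk).lt_or_eq with hk' | hk'
    · rw [add_assoc, hval i (k + 1) hk']
      exact hs
    · have : i * L + k + 1 = (i + 1) * L + 0 := by rw [add_mul]; omega
      rw [this, hval (i + 1) 0 hL0, hz0, ← (hz i hi).1]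
      rw [← hk']
      exact hs
  · intro y
    obtain ⟨e, he, hey⟩ := hE y
    obtain ⟨i, hi, hie⟩ := h.dense e
    obtain ⟨j, hj, rfl⟩ := (hz i hi).2.2 e ⟨he, hie⟩
    refine ⟨i * L + j, ?_, ?_⟩
    · have := Nat.mul_le_mul_right L (Nat.succ_le_of_lt hi)
      rw [Nat.succ_mul] at this
      omega
    · rwa [hval i j hj]
  · intro i _
    have := hval i 0 hL0
    rw [add_zero, hz0] at this
    exact this
  · intro j hj
    have hk := Nat.mod_lt j hL0
    rcases lt_or_ge (j / L) N with hi | hi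
    · exact ((hz _ hi).2.1 _ hk).1
    · have hjL : j = N * L :=
        le_antisymm hj (by simpa using (Nat.mul_le_mul_right L hi).trans (Nat.div_mul_le_self j L))
      subst hjL
      simpa [hz0, hL0] using hε

theorem IsWalk.dist_floor_le {X : Type*} [MetricSpace X] {ε : ℝ} {w : ℕ → X} {N : ℕ}
    (h : IsWalk ε w N) {s t : I} (hst : dist s t < 1 / N) :
    dist (w ⌊(s : ℝ) * N⌋₊) (w ⌊(t : ℝ) * N⌋₊) ≤ ε := by
  wlog hle : s ≤ t generalizing s t
  · rw [dist_comm]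
    exact this (by rwa [dist_comm]) (le_of_not_ge hle)
  have hN : (0 : ℝ) < N := by exact_mod_cast h.pos
  have hε : 0 ≤ ε := dist_nonneg.trans (h.step 0 h.pos).dist_le
  have hle' : (s : ℝ) ≤ t := hle
  rw [Subtype.dist_eq, Real.dist_eq, abs_sub_comm, abs_of_nonneg (by linarith),
    lt_div_iff₀ hN] at hst
  have h1 : ⌊(s : ℝ) * N⌋₊ ≤ ⌊(t : ℝ) * N⌋₊ := Nat.floor_le_floor (by gcongr)
  have h2 : ⌊(t : ℝ) * N⌋₊ ≤ ⌊(s : ℝ) * N⌋₊ + 1 := by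
    rw [← Nat.floor_add_one (mul_nonneg s.2.1 hN.le)]
    exact Nat.floor_le_floor (by nlinarith)
  have h3 : ⌊(t : ℝ) * N⌋₊ ≤ N := Nat.floor_le_of_le (by nlinarith [t.2.2])
  rcases h1.eq_or_lt with h4 | h4
  · rw [h4, dist_self]
    exact hε
  · have h5 : ⌊(t : ℝ) * N⌋₊ = ⌊(s : ℝ) * N⌋₊ + 1 := by omega
    rw [h5]
    exact (h.step _ (by omega)).dist_le

/-- **Hahn–Mazurkiewicz theorem** with prescribed endpoints. -/
theorem exists_continuous_surjective_unitInterval {X : Type*} [MetricSpace X] [CompactSpace X]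
    [ConnectedSpace X] [LocallyConnectedSpace X] (a b : X) :
    ∃ f : I → X, Continuous f ∧ Function.Surjective f ∧ f 0 = a ∧ f 1 = b := by
  set C : ℝ := Metric.diam (univ : Set X) + 1
  have hC : 0 < C := by positivity
  have hall : ∀ x y : X, SmallJoined (C / 2 ^ 0) x y := fun x y =>
    ⟨univ, isPreconnected_univ, trivial, trivial, fun u _ v _ => by
      have := Metric.dist_le_diam_of_mem (isCompact_univ (X := X)).isBounded
        (mem_univ u) (mem_univ v)
      simp only [pow_zero, div_one, C]
      linarith⟩
  have hstep : ∀ (n : ℕ) (p : {p : (ℕ → X) × ℕ // IsWalk (C / 2 ^ n) p.1 p.2}),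
      ∃ q : {p : (ℕ → X) × ℕ // IsWalk (C / 2 ^ (n + 1)) p.1 p.2}, ∃ L : ℕ, 0 < L ∧
        q.1.2 = p.1.2 * L ∧ (∀ i ≤ p.1.2, q.1.1 (i * L) = p.1.1 i) ∧
        ∀ j ≤ p.1.2 * L, dist (p.1.1 (j / L)) (q.1.1 j) ≤ C / 2 ^ n := by
    rintro n ⟨⟨w, N⟩, h⟩
    obtain ⟨w', L, hw', hL, h1, h2⟩ :=
      h.exists_refinement (δ := C / 2 ^ (n + 1)) (by positivity)
    exact ⟨⟨⟨w', N * L⟩, hw'⟩, L, hL, rfl, h1, h2⟩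
  choose next L hL hN hfix hdist using hstep
  let w₀ : {p : (ℕ → X) × ℕ // IsWalk (C / 2 ^ 0) p.1 p.2} :=
    ⟨⟨fun i => if i = 0 then a else b, 1⟩, one_pos, fun _ _ => hall _ _,
      fun y => ⟨0, one_pos, hall _ _⟩⟩
  let s : ∀ n, {p : (ℕ → X) × ℕ // IsWalk (C / 2 ^ n) p.1 p.2} :=
    fun n => Nat.rec w₀ (fun n p => next n p) n
  set w : ℕ → ℕ → X := fun n => (s n).1.1
  set N : ℕ → ℕ := fun n => (s n).1.2
  have hw : ∀ n, IsWalk (C / 2 ^ n) (w n) (N n) := fun n => (s n).2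
  have hNs : ∀ n, N (n + 1) = N n * L n (s n) := fun n => hN n (s n)
  let g : ℕ → I → X := fun n t => w n ⌊(t : ℝ) * N n⌋₊
  have hg : ∀ t n, dist (g n t) (g (n + 1) t) ≤ 2 * C / 2 / 2 ^ n := by
    intro t n
    have hLn : (0 : ℝ) < L n (s n) := by exact_mod_cast hL n (s n)
    have h1 : ⌊(t : ℝ) * N (n + 1)⌋₊ / L n (s n) = ⌊(t : ℝ) * N n⌋₊ := by
      rw [← Nat.floor_div_natCast, hNs]
      push_cast
      rw [← mul_assoc, mul_div_cancel_right₀ _ hLn.ne']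
    have h2 := hdist n (s n) ⌊(t : ℝ) * N (n + 1)⌋₊ (by
      rw [← hN]
      refine Nat.floor_le_of_le ?_
      exact mul_le_of_le_one_left (Nat.cast_nonneg _) t.2.2)
    rw [h1] at h2
    rwa [mul_div_cancel_left₀ _ two_ne_zero]
  have hlim : ∀ t, ∃ x, Tendsto (fun n => g n t) atTop (𝓝 x) := fun t =>
    cauchySeq_tendsto_of_complete (cauchySeq_of_le_geometric_two (hg t))
  choose f hf using hlim
  have hgf : ∀ n t, dist (g n t) (f t) ≤ 2 * C / 2 ^ n := fun n t =>
    dist_le_of_le_geometric_two_of_tendsto (hg t) (hf t) n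
  have hsmall : ∀ ε > 0, ∃ n : ℕ, 5 * (C / 2 ^ n) < ε := by
    intro ε hε
    have : Tendsto (fun n : ℕ => 5 * (C * (1 / 2 : ℝ) ^ n)) atTop (𝓝 (5 * (C * 0))) :=
      ((tendsto_pow_atTop_nhds_zero_of_lt_one (by norm_num) (by norm_num)).const_mul C).const_mul 5
    obtain ⟨n, hn⟩ := (this.eventually (gt_mem_nhds (by simpa using hε))).exists
    exact ⟨n, by simpa [div_eq_mul_inv] using hn⟩
  have hcont : Continuous f := by
    refine Metric.continuous_iff.2 fun t ε hε => ?_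
    obtain ⟨n, hn⟩ := hsmall ε hε
    have hNn : (0 : ℝ) < N n := by exact_mod_cast (hw n).pos
    refine ⟨1 / N n, by positivity, fun u hu => ?_⟩
    have h1 : dist (g n u) (g n t) ≤ C / 2 ^ n := (hw n).dist_floor_le hu
    have h2 := hgf n u
    have h3 := hgf n t
    rw [mul_div_assoc] at h2 h3
    linarith [dist_triangle4 (f u) (g n u) (g n t) (f t), dist_comm (f u) (g n u)]
  refine ⟨f, hcont, fun y => ?_, ?_, ?_⟩
  · have hcl : IsClosed (range f) := (isCompact_range hcont).isClosed
    refine hcl.closure_subset (Metric.mem_closure_range_iff.2 fun ε hε => ?_)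
    obtain ⟨n, hn⟩ := hsmall ε hε
    have hNn : (0 : ℝ) < N n := by exact_mod_cast (hw n).pos
    obtain ⟨i, hi, hiy⟩ := (hw n).dense y
    have hi' : (i : ℝ) / N n ≤ 1 := by
      rw [div_le_one hNn]
      exact_mod_cast hi.le
    refine ⟨⟨i / N n, by positivity, hi'⟩, ?_⟩
    have h1 := hgf n ⟨i / N n, by positivity, hi'⟩
    have h2 : g n ⟨i / N n, by positivity, hi'⟩ = w n i := by
      simp only [g]
      rw [div_mul_cancel₀ _ hNn.ne', Nat.floor_natCast]
    rw [h2, mul_div_assoc] at h1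
    have h3 := hiy.dist_le
    have : 0 < C / 2 ^ n := by positivity
    linarith [dist_triangle_left y (f ⟨i / N n, by positivity, hi'⟩) (w n i)]
  · refine tendsto_nhds_unique (hf 0) (tendsto_const_nhds.congr fun n => ?_)
    simp only [g, Icc.coe_zero, zero_mul, Nat.floor_zero]
    induction n with
    | zero => rfl
    | succ n ih =>
      rw [ih]
      simpa using (hfix n (s n) 0 (Nat.zero_le _)).symm
  · refine tendsto_nhds_unique (hf 1) (tendsto_const_nhds.congr fun n => ?_)
    simp only [g, Icc.coe_one, one_mul, Nat.floor_natCast]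
    induction n with
    | zero => rfl
    | succ n ih =>
      rw [ih, hNs]
      exact (hfix n (s n) _ le_rfl).symm

/-- `γ` takes equal values at the two ends of every gap of the closed set `K`, which contains
both ends of the unit interval. -/
structure GapConst {X : Type*} (γ : I → X) (K : Set I) : Prop where
  isClosed : IsClosed K
  zero_mem : 0 ∈ K
  one_mem : 1 ∈ K
  eq_of_gap : ∀ u ∈ K, ∀ v ∈ K, u < v → (∀ w ∈ K, u < w → ¬ w < v) → γ u = γ v

/-- `κ t` is the last point of `K` that is at most `t`. -/
structure IsLastPoint (K : Set I) (κ : I → I) : Prop where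
  mem : ∀ t, κ t ∈ K
  le : ∀ t, κ t ≤ t
  max : ∀ t, ∀ v ∈ K, v ≤ t → v ≤ κ t

namespace IsLastPoint

variable {X : Type*} {K : Set I} {κ : I → I} {γ : I → X}

theorem exists_of_isClosed (hK : IsClosed K) (h0 : 0 ∈ K) : ∃ κ, IsLastPoint K κ := by
  have : ∀ t : I, ∃ u, IsGreatest (K ∩ Iic t) u := fun t =>
    (hK.inter isClosed_Iic).isCompact.exists_isGreatest ⟨0, h0, t.2.1⟩
  choose κ hκ using this
  exact ⟨κ, fun t => (hκ t).1.1, fun t => (hκ t).1.2, fun t v hv hvt => (hκ t).2 ⟨hv, hvt⟩⟩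

theorem eq_self (h : IsLastPoint K κ) {t : I} (ht : t ∈ K) : κ t = t :=
  le_antisymm (h.le t) (h.max t t ht le_rfl)

theorem mono (h : IsLastPoint K κ) : Monotone κ := fun s t hst =>
  h.max t _ (h.mem s) ((h.le s).trans hst)

theorem eq_of_lt (h : IsLastPoint K κ) {s t : I} (hst : s ≤ t) (ht : κ t ≤ s) : κ s = κ t :=
  le_antisymm (h.mono hst) (h.max s _ (h.mem t) ht)

theorem exists_next (h : IsLastPoint K κ) (hγ : GapConst γ K) {t v : I} (hv : v ∈ K)
    (htv : t ≤ v) : ∃ v' ∈ K, t ≤ v' ∧ v' ≤ v ∧ γ v' = γ (κ t) := by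
  obtain ⟨v', ⟨hv'K, hv't⟩, hmin⟩ :=
    (hγ.isClosed.inter isClosed_Ici).isCompact.exists_isLeast (⟨v, hv, htv⟩ : (K ∩ Ici t).Nonempty)
  refine ⟨v', hv'K, hv't, hmin ⟨hv, htv⟩, ?_⟩
  rcases ((h.le t).trans hv't).eq_or_lt with heq | hlt
  · rw [heq]
  · refine (hγ.eq_of_gap _ (h.mem t) _ hv'K hlt fun w hw h1 h2 => ?_).symm
    rcases le_total w t with hwt | hwt
    · exact (h.max t w hw hwt).not_gt h1
    · exact (hmin ⟨hw, hwt⟩).not_gt h2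

/-- Between `t` and any point `v` of `K` there is a point where `γ` takes the value `γ (κ t)`. -/
theorem exists_dist_le (h : IsLastPoint K κ) (hγ : GapConst γ K) {t v : I} (hv : v ∈ K) :
    ∃ v', dist v' t ≤ dist v t ∧ γ v' = γ (κ t) := by
  rcases le_total t v with htv | hvt
  · obtain ⟨v', -, h1, h2, h3⟩ := h.exists_next hγ hv htv
    refine ⟨v', ?_, h3⟩
    have h1' : (t : ℝ) ≤ v' := h1
    have h2' : (v' : ℝ) ≤ v := h2
    rw [Subtype.dist_eq, Subtype.dist_eq, Real.dist_eq, Real.dist_eq, abs_of_nonneg (by linarith),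
      abs_of_nonneg (by linarith)]
    linarith
  · refine ⟨κ t, ?_, rfl⟩
    have h1' : (v : ℝ) ≤ κ t := h.max t v hv hvt
    have h2' : (κ t : ℝ) ≤ t := h.le t
    rw [Subtype.dist_eq, Subtype.dist_eq, Real.dist_eq, Real.dist_eq, abs_of_nonpos (by linarith),
      abs_of_nonpos (by linarith)]
    linarith

theorem continuous_comp [MetricSpace X] (h : IsLastPoint K κ) (hγ : GapConst γ K)
    (hc : Continuous γ) : Continuous (γ ∘ κ) := by
  have huc := Metric.uniformContinuous_iff.1 (CompactSpace.uniformContinuous_of_continuous hc)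
  refine (Metric.uniformContinuous_iff.2 fun ε hε => ?_).continuous
  obtain ⟨δ, hδ, H⟩ := huc ε hε
  refine ⟨δ, hδ, fun {s t} hst => ?_⟩
  wlog hle : s ≤ t generalizing s t
  · rw [dist_comm]
    exact this (by rwa [dist_comm]) (le_of_not_ge hle)
  rcases le_total (κ t) s with hts | hts
  · simpa [h.eq_of_lt hle hts] using hε
  · obtain ⟨v', -, h1, h2, h3⟩ := h.exists_next hγ (h.mem t) hts
    simp only [Function.comp_apply]
    rw [← h3]
    refine H (lt_of_le_of_lt ?_ hst)
    have h1' : (s : ℝ) ≤ v' := h1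
    have h2' : (v' : ℝ) ≤ κ t := h2
    have h3' : (κ t : ℝ) ≤ t := h.le t
    rw [Subtype.dist_eq, Subtype.dist_eq, Real.dist_eq, Real.dist_eq, abs_of_nonpos (by linarith),
      abs_of_nonpos (by linarith)]
    linarith

end IsLastPoint

theorem GapConst.exists_minimal {X : Type*} [MetricSpace X] {γ : I → X} (hγ : Continuous γ) :
    ∃ K, Minimal (GapConst γ) K := by
  have huniv : GapConst γ univ := ⟨isClosed_univ, trivial, trivial, fun u _ v _ huv h =>
    let ⟨w, h1, h2⟩ := exists_between huv
    absurd h2 (h w trivial h1)⟩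
  refine (zorn_superset_nonempty {K | GapConst γ K} (fun c hc hchain hne => ?_) univ huniv).imp
    fun K hK => hK.2
  refine ⟨⋂₀ c, ⟨isClosed_sInter fun K hK => (hc hK).isClosed, fun K hK => (hc hK).zero_mem,
    fun K hK => (hc hK).one_mem, fun u hu v hv huv hgap => ?_⟩, fun K hK => sInter_subset_of_mem hK⟩
  obtain ⟨m, hum, hmv⟩ := exists_between huv
  -- near the gap of the intersection there are gaps of members of the chain
  have key : ∀ u' v', u < u' → u' ≤ m → m ≤ v' → v' < v →
      ∃ p q, u ≤ p ∧ p ≤ u' ∧ v' ≤ q ∧ q ≤ v ∧ γ p = γ q := by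
    intro u' v' huu' hu'm hmv' hv'v
    have hex : ∃ K ∈ c, Icc u' v' ∩ K = ∅ := by
      by_contra! hcon
      have : Nonempty c := hne.to_subtype
      have hdir : Directed (· ⊇ ·) fun K : c => Icc u' v' ∩ (K : Set I) := fun A B => by
        rcases hchain.total A.2 B.2 with hAB | hAB
        · exact ⟨A, subset_rfl, inter_subset_inter_right _ hAB⟩
        · exact ⟨B, inter_subset_inter_right _ hAB, subset_rfl⟩
      obtain ⟨x, hx⟩ := IsCompact.nonempty_iInter_of_directed_nonempty_isCompact_isClosed
        (fun K : c => Icc u' v' ∩ (K : Set I)) hdir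
        (fun K => hcon K K.2)
        (fun K => (isClosed_Icc.inter (hc K.2).isClosed).isCompact)
        (fun K => isClosed_Icc.inter (hc K.2).isClosed)
      have hx' : ∀ K ∈ c, x ∈ Icc u' v' ∩ K := fun K hK => mem_iInter.1 hx ⟨K, hK⟩
      obtain ⟨K₀, hK₀⟩ := hne
      have hxI := (hx' K₀ hK₀).1
      exact hgap x (fun K hK => (hx' K hK).2) (huu'.trans_le hxI.1) (hxI.2.trans_lt hv'v)
    obtain ⟨K, hKc, hK⟩ := hex
    have hKg := hc hKc
    obtain ⟨κ, hκ⟩ := IsLastPoint.exists_of_isClosed hKg.isClosed hKg.zero_mem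
    obtain ⟨q, hqK, hmq, hqv, hq⟩ := hκ.exists_next hKg (hv K hKc) hmv.le
    refine ⟨κ m, q, hκ.max m u (hu K hKc) hum.le, ?_, ?_, hqv, hq.symm⟩
    · by_contra! hlt
      exact (hK ▸ ⟨⟨hlt.le, (hκ.le m).trans hmv'⟩, hκ.mem m⟩ : κ m ∈ (∅ : Set I))
    · by_contra! hlt
      exact (hK ▸ ⟨⟨hu'm.trans hmq, hlt.le⟩, hqK⟩ : q ∈ (∅ : Set I))
  refine eq_of_forall_dist_le fun ε hε => ?_
  obtain ⟨δ, hδ, H⟩ := Metric.uniformContinuous_iff.1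
    (CompactSpace.uniformContinuous_of_continuous hγ) (ε / 2) (half_pos hε)
  obtain ⟨u', hu', hu'δ⟩ : ∃ u', u < u' ∧ u' ≤ m ∧ dist u' u < δ := by
    have : ∀ᶠ u' in 𝓝[>] u, dist u' u < δ :=
      nhdsWithin_le_nhds (Metric.ball_mem_nhds u hδ)
    have hne : (𝓝[>] u).NeBot := nhdsGT_neBot_of_exists_gt ⟨m, hum⟩
    obtain ⟨u', h1, h2⟩ := (this.and (Ioc_mem_nhdsGT hum)).exists
    exact ⟨u', h2.1, h2.2, h1⟩
  obtain ⟨v', hv', hmv', hv'δ⟩ : ∃ v', v' < v ∧ m ≤ v' ∧ dist v' v < δ := by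
    have : ∀ᶠ v' in 𝓝[<] v, dist v' v < δ :=
      nhdsWithin_le_nhds (Metric.ball_mem_nhds v hδ)
    have hne : (𝓝[<] v).NeBot := nhdsLT_neBot_of_exists_lt ⟨m, hmv⟩
    obtain ⟨v', h1, h2⟩ := (this.and (Ico_mem_nhdsLT hmv)).exists
    exact ⟨v', h2.2, h2.1, h1⟩
  obtain ⟨p, q, hup, hpu', hv'q, hqv, hpq⟩ := key u' v' hu' hu'δ.1 hmv' hv'
  have h1 : dist (γ u) (γ p) < ε / 2 := H <| by
    refine lt_of_le_of_lt ?_ hu'δ.2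
    have h1' : (u : ℝ) ≤ p := hup
    have h2' : (p : ℝ) ≤ u' := hpu'
    rw [Subtype.dist_eq, Subtype.dist_eq, Real.dist_eq, Real.dist_eq, abs_of_nonpos (by linarith),
      abs_of_nonneg (by linarith)]
    linarith
  have h2 : dist (γ q) (γ v) < ε / 2 := H <| by
    refine lt_of_le_of_lt ?_ hv'δ
    have h1' : (v' : ℝ) ≤ q := hv'q
    have h2' : (q : ℝ) ≤ v := hqv
    rw [Subtype.dist_eq, Subtype.dist_eq, Real.dist_eq, Real.dist_eq, abs_of_nonpos (by linarith),
      abs_of_nonpos (by linarith)]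
    linarith
  rw [← hpq] at h2
  linarith [dist_triangle (γ u) (γ p) (γ v)]

/-- A path can be shortened to a path each of whose fibres is order-connected. -/
theorem exists_path_ordConnected_fibres {X : Type*} [MetricSpace X] {γ : I → X}
    (hγ : Continuous γ) :
    ∃ η : I → X, Continuous η ∧ range η ⊆ range γ ∧ η 0 = γ 0 ∧ η 1 = γ 1 ∧
      ∀ s t u, s ≤ t → t ≤ u → η s = η u → η t = η s := by
  obtain ⟨K, hK, hmin⟩ := GapConst.exists_minimal hγ
  obtain ⟨κ, hκ⟩ := IsLastPoint.exists_of_isClosed hK.isClosed hK.zero_mem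
  refine ⟨γ ∘ κ, hκ.continuous_comp hK hγ, range_comp_subset_range _ _,
    by simp [hκ.eq_self hK.zero_mem], by simp [hκ.eq_self hK.one_mem], ?_⟩
  intro s t u hst htu hsu
  simp only [Function.comp_apply] at hsu ⊢
  have hK' : GapConst γ (K \ Ioo (κ s) (κ u)) := by
    refine ⟨hK.isClosed.sdiff isOpen_Ioo, ⟨hK.zero_mem, fun h => h.1.not_ge (κ s).2.1⟩,
      ⟨hK.one_mem, fun h => h.2.not_ge (κ u).2.2⟩, fun p hp q hq hpq hgap => ?_⟩
    by_cases hex : ∃ w ∈ K, p < w ∧ w < q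
    · obtain ⟨w, hwK, hpw, hwq⟩ := hex
      have hw : w ∈ Ioo (κ s) (κ u) := by
        by_contra hw
        exact hgap w ⟨hwK, hw⟩ hpw hwq
      have hps : p ≤ κ s := by
        by_contra! h
        exact hp.2 ⟨h, hpw.trans hw.2⟩
      have huq : κ u ≤ q := by
        by_contra! h
        exact hq.2 ⟨hw.1.trans hwq, h⟩
      have hps' : p = κ s := hps.eq_of_not_lt fun h =>
        hgap _ ⟨hκ.mem s, fun h' => h'.1.false⟩ h (hw.1.trans hwq)
      have huq' : κ u = q := huq.eq_of_not_lt fun h =>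
        hgap _ ⟨hκ.mem u, fun h' => h'.2.false⟩ (hpw.trans hw.2) h
      rw [hps', ← huq', hsu]
    · push Not at hex
      exact hK.eq_of_gap p hp.1 q hq.1 hpq fun w hw h1 h2 => (hex w hw h1).not_gt h2
  have hsub := hmin hK' sdiff_subset (hκ.mem t)
  have h1 := hκ.mono hst
  have h2 := hκ.mono htu
  rcases h1.eq_or_lt with h1 | h1
  · rw [h1]
  · rcases h2.eq_or_lt with h2 | h2
    · rw [h2, hsu]
    · exact absurd ⟨h1, h2⟩ hsub.2

/-- The distance from the point `η q` to the final part of the path `η` starting at time `t`. -/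
noncomputable def tailDist {X : Type*} [MetricSpace X] (η : I → X) (q t : I) : ℝ :=
  sInf ((fun s => dist (η q) (η (max s t))) '' univ)

namespace tailDist

variable {X : Type*} [MetricSpace X] {η : I → X}

theorem continuous (hη : Continuous η) (q : I) : Continuous (tailDist η q) :=
  isCompact_univ.continuous_sInf
    (f := fun t s : I => dist (η q) (η (max s t))) (by fun_prop)

theorem exists_eq (hη : Continuous η) (q t : I) :
    ∃ s, tailDist η q t = dist (η q) (η (max s t)) :=
  let ⟨s, _, hs⟩ := isCompact_univ.exists_sInf_image_eq (s := (univ : Set I)) univ_nonempty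
    (f := fun s : I => dist (η q) (η (max s t))) (by fun_prop)
  ⟨s, hs⟩

theorem le (q : I) {s t : I} (hst : t ≤ s) : tailDist η q t ≤ dist (η q) (η s) :=
  csInf_le ⟨0, by rintro _ ⟨s, -, rfl⟩; exact dist_nonneg⟩ ⟨s, trivial, by simp [hst]⟩

theorem nonneg (q t : I) : 0 ≤ tailDist η q t :=
  Real.sInf_nonneg (by rintro _ ⟨s, -, rfl⟩; exact dist_nonneg)

theorem eq_zero {q t : I} (h : t ≤ q) : tailDist η q t = 0 :=
  le_antisymm (by simpa using le (η := η) q h) (nonneg q t)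

theorem mono (hη : Continuous η) (q : I) : Monotone (tailDist η q) := fun t t' h => by
  obtain ⟨s, hs⟩ := exists_eq hη q t'
  rw [hs]
  exact le q (h.trans (le_max_right _ _))

theorem pos (hη : Continuous η) (hfib : ∀ s t u, s ≤ t → t ≤ u → η s = η u → η t = η s)
    {q t : I} (hqt : q ≤ t) (hne : η q ≠ η t) : 0 < tailDist η q t := by
  obtain ⟨s, hs⟩ := exists_eq hη q t
  rw [hs, dist_pos]
  exact fun h => hne (hfib q t _ hqt (le_max_right _ _) h).symm

theorem congr (hη : Continuous η) (hfib : ∀ s t u, s ≤ t → t ≤ u → η s = η u → η t = η s)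
    (q : I) {t t' : I} (h : t ≤ t') (heq : η t = η t') : tailDist η q t = tailDist η q t' := by
  refine le_antisymm (mono hη q h) ?_
  obtain ⟨s, hs⟩ := exists_eq hη q t
  rw [hs]
  rcases le_total t' (max s t) with h1 | h1
  · exact le q h1
  · rw [hfib t _ t' (le_max_right _ _) h1 heq, heq]
    exact le q le_rfl

end tailDist

/-- A path with distinct endpoints can be shortened to an injective path. -/
theorem exists_injective_path {X : Type*} [MetricSpace X] {γ : I → X} (hγ : Continuous γ)
    (hne : γ 0 ≠ γ 1) :
    ∃ β : I → X, Continuous β ∧ Function.Injective β ∧ range β ⊆ range γ ∧ β 0 = γ 0 ∧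
      β 1 = γ 1 := by
  obtain ⟨η, hη, hrange, h0, h1, hfib⟩ := exists_path_ordConnected_fibres hγ
  let q : ℕ → I := TopologicalSpace.denseSeq I
  have hq : DenseRange q := TopologicalSpace.denseRange_denseSeq I
  set C : ℝ := Metric.diam (range η)
  have hbd : ∀ n t, tailDist η (q n) t ≤ C := fun n t =>
    (tailDist.le _ le_rfl).trans (Metric.dist_le_diam_of_mem (isCompact_range hη).isBounded
      (mem_range_self _) (mem_range_self _))
  let F : ℕ → I → ℝ := fun n t => (1 / 2 : ℝ) ^ n * tailDist η (q n) t
  have hFb : ∀ n t, ‖F n t‖ ≤ (1 / 2 : ℝ) ^ n * C := fun n t => by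
    rw [Real.norm_of_nonneg (mul_nonneg (by positivity) (tailDist.nonneg _ _))]
    exact mul_le_mul_of_nonneg_left (hbd n t) (by positivity)
  have hsum : Summable fun n : ℕ => (1 / 2 : ℝ) ^ n * C := summable_geometric_two.mul_right C
  have hFs : ∀ t, Summable fun n => F n t := fun t => .of_norm_bounded hsum fun n => hFb n t
  let c : I → ℝ := fun t => ∑' n, F n t
  have hc : Continuous c :=
    continuous_tsum (fun n => (tailDist.continuous hη _).const_mul _) hsum hFb
  have hFmono : ∀ n, Monotone (F n) := fun n t t' h =>
    mul_le_mul_of_nonneg_left (tailDist.mono hη _ h) (by positivity)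
  have hmono : Monotone c := fun t t' h =>
    (hFs t).tsum_le_tsum (fun n => hFmono n h) (hFs t')
  have hlt : ∀ t t', t ≤ t' → η t ≠ η t' → c t < c t' := by
    intro t t' htt' hne
    have htt' := htt'.lt_of_ne fun h => hne (h ▸ rfl)
    have hne' : (𝓝[>] t).NeBot := nhdsGT_neBot_of_exists_gt ⟨t', htt'⟩
    obtain ⟨u, hu, hu'⟩ : ∃ u, t < u ∧ ∀ r ∈ Ioo t u, r < t' ∧ η r ≠ η t' := by
      have hev : ∀ᶠ r in 𝓝 t, r < t' ∧ η r ≠ η t' :=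
        (gt_mem_nhds htt').and (hη.continuousAt.eventually_ne hne)
      obtain ⟨u, hu, hsub⟩ := (mem_nhdsGT_iff_exists_Ioo_subset' htt').1
        (nhdsWithin_le_nhds hev)
      exact ⟨u, hu, fun r hr => hsub hr⟩
    obtain ⟨n, hn⟩ := hq.exists_mem_open isOpen_Ioo (nonempty_Ioo.2 hu)
    refine Summable.tsum_lt_tsum (i := n) (fun m => hFmono m htt'.le) ?_ (hFs t) (hFs t')
    have h1 := tailDist.eq_zero (η := η) hn.1.le
    have h2 := tailDist.pos hη hfib (hu' _ hn).1.le (hu' _ hn).2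
    simp only [F, h1, mul_zero]
    positivity
  have hceq : ∀ t t', c t = c t' ↔ η t = η t' := by
    intro t t'
    wlog h : t ≤ t' generalizing t t'
    · rw [eq_comm, this t' t (le_of_not_ge h), eq_comm]
    refine ⟨fun hc => by_contra fun hne => (hlt t t' h hne).ne hc, fun heq => ?_⟩
    exact tsum_congr fun n => by simp only [F, tailDist.congr hη hfib _ h heq]
  have hc0 : c 0 = 0 := by
    have : ∀ n, F n 0 = 0 := fun n => by simp [F, tailDist.eq_zero (η := η) (nonneg' (t := q n))]
    simp only [c, this, tsum_zero]
  have hc1 : 0 < c 1 := hc0 ▸ hlt 0 1 zero_le_one (by rwa [h0, h1])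
  let d : I → I := fun t => ⟨c t / c 1, div_nonneg (hc0 ▸ hmono t.2.1) hc1.le,
    (div_le_one hc1).2 (hmono t.2.2)⟩
  have hd : Continuous d := (hc.div_const _).subtype_mk _
  have hd0 : d 0 = 0 := Subtype.ext (by simp [d, hc0])
  have hd1 : d 1 = 1 := Subtype.ext (by simp [d, hc1.ne'])
  have hdeq : ∀ t t', d t = d t' ↔ η t = η t' := fun t t' => by
    rw [← hceq, Subtype.ext_iff]
    exact div_left_inj' hc1.ne'
  have hsurj : Function.Surjective d := fun u => by
    refine intermediate_value_univ 0 1 hd ?_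
    rw [hd0, hd1]
    exact ⟨nonneg', le_one'⟩
  let β : I → X := fun u => η (Function.surjInv hsurj u)
  have hβ : ∀ t, β (d t) = η t := fun t => (hdeq _ _).1 (Function.surjInv_eq hsurj _)
  refine ⟨β, ?_, ?_, ?_, ?_, ?_⟩
  · have : Topology.IsQuotientMap d := hd.isClosedMap.isQuotientMap hd hsurj
    rw [this.continuous_iff]
    exact hη.congr fun t => (hβ t).symm
  · intro u v huv
    rw [← Function.surjInv_eq hsurj u, ← Function.surjInv_eq hsurj v]
    exact (hdeq _ _).2 huv
  · rintro _ ⟨u, rfl⟩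
    exact hrange (mem_range_self _)
  · rw [← h0, ← hβ, hd0]
  · rw [← h1, ← hβ, hd1]

/-- Two arcs that meet exactly at the endpoints of the second one form a circle. -/
theorem exists_isEmbedding_addCircle {X : Type*} [MetricSpace X] {α β : I → X}
    (hα : Continuous α) (hαi : Function.Injective α) (hβ : Continuous β)
    (hβi : Function.Injective β) {x y : I} (hxy : x ≠ y) (h0 : β 0 = α x) (h1 : β 1 = α y)
    (hdisj : ∀ t, t ≠ 0 → t ≠ 1 → β t ∉ range α) :
    ∃ f : AddCircle (1 : ℝ) → X, Topology.IsEmbedding f := by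
  let P : ℝ → I := projIcc 0 1 zero_le_one
  have hP : Continuous P := continuous_projIcc
  have hPv : ∀ v ∈ Icc (0 : ℝ) 1, (P v : ℝ) = v := fun v hv => by
    simp only [P, projIcc_of_mem _ hv]
  let l : ℝ → X := fun t =>
    if t ≤ 1 / 2 then α (P (x + (y - x) * (2 * t))) else β (P (2 - 2 * t))
  have hl : Continuous l := by
    refine Continuous.if_le (by fun_prop) (by fun_prop) continuous_id continuous_const ?_
    rintro t rfl
    have e1 : P (x + (y - x) * (2 * (1 / 2))) = y := by
      have : (x : ℝ) + (y - x) * (2 * (1 / 2)) = y := by ring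
      rw [this]
      exact projIcc_val zero_le_one y
    have e2 : P (2 - 2 * (1 / 2)) = 1 := by
      norm_num
      exact projIcc_right zero_le_one
    rw [e1, e2, h1]
  have hl01 : l 0 = l 1 := by
    have e2 : P (2 - 2 * 1) = 0 := by
      norm_num
      exact projIcc_left zero_le_one
    have e3 : P x = x := projIcc_val zero_le_one x
    have : ¬ (1 : ℝ) ≤ 1 / 2 := by norm_num
    simp only [l, this, if_false, e2, h0]
    simp [e3]
  have hmemA : ∀ t : ℝ, 0 ≤ t → t ≤ 1 / 2 → (x : ℝ) + (y - x) * (2 * t) ∈ Icc (0 : ℝ) 1 := by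
    intro t ht0 ht1
    have hx := x.2
    have hy := y.2
    constructor <;> nlinarith [hx.1, hx.2, hy.1, hy.2]
  have hmixed : ∀ t t' : ℝ, t ≤ 1 / 2 → ¬ t' ≤ 1 / 2 → t' < 1 → l t ≠ l t' := by
    intro t t' ht ht' ht1 heq
    simp only [l, ht, ht', if_true, if_false] at heq
    push Not at ht'
    have hv := hPv (2 - 2 * t') ⟨by linarith, by linarith⟩
    refine hdisj (P (2 - 2 * t')) (fun h => ?_) (fun h => ?_) ⟨_, heq⟩
    · rw [h] at hv
      simp only [Icc.coe_zero] at hv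
      linarith
    · rw [h] at hv
      simp only [Icc.coe_one] at hv
      linarith
  have hinj : InjOn l (Ico 0 1) := by
    intro t ht t' ht' heq
    by_cases h : t ≤ 1 / 2 <;> by_cases h' : t' ≤ 1 / 2
    · simp only [l, h, h', if_true] at heq
      have := congrArg Subtype.val (hαi heq)
      rw [hPv _ (hmemA t ht.1 h), hPv _ (hmemA t' ht'.1 h')] at this
      have hne : (y : ℝ) - x ≠ 0 := sub_ne_zero.2 fun h => hxy (Subtype.ext h.symm)
      have := mul_left_cancel₀ hne (add_left_cancel this)
      linarith
    · exact absurd heq (hmixed t t' h h' ht'.2)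
    · exact absurd heq.symm (hmixed t' t h' h ht.2)
    · simp only [l, h, h', if_false] at heq
      have := congrArg Subtype.val (hβi heq)
      push Not at h h'
      rw [hPv _ ⟨by linarith [ht.2], by linarith⟩, hPv _ ⟨by linarith [ht'.2], by linarith⟩] at this
      linarith
  have : Fact ((0 : ℝ) < 1) := ⟨one_pos⟩
  refine ⟨AddCircle.liftIco 1 0 l, ((AddCircle.liftIco_zero_continuous hl01
    hl.continuousOn).isClosedEmbedding ?_).isEmbedding⟩
  intro u v huv
  obtain ⟨s, hs, rfl⟩ := AddCircle.eq_coe_Ico u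
  obtain ⟨t, ht, rfl⟩ := AddCircle.eq_coe_Ico v
  rw [AddCircle.liftIco_zero_coe_apply hs, AddCircle.liftIco_zero_coe_apply ht] at huv
  rw [hinj hs ht huv]

/-- If a space contains no circle, then a path that leaves an arc can only return to the point
where it left. -/
theorem eq_of_joinedIn_compl_arc {X : Type*} [MetricSpace X]
    (hX : ¬ ∃ f : AddCircle (1 : ℝ) → X, Topology.IsEmbedding f) {α : I → X}
    (hα : Continuous α) (hαi : Function.Injective α) {p q : X} (hp : p ∈ range α)
    (hq : q ∈ range α) (h : JoinedIn ((range α)ᶜ ∪ {p, q}) p q) : p = q := by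
  by_contra hne
  obtain ⟨γ, hγ⟩ := h
  obtain ⟨β, hβ, hβi, hr, hβ0, hβ1⟩ := exists_injective_path γ.continuous (by simpa using hne)
  rw [γ.source] at hβ0
  rw [γ.target] at hβ1
  obtain ⟨x, rfl⟩ := hp
  obtain ⟨y, rfl⟩ := hq
  refine hX (exists_isEmbedding_addCircle hα hαi hβ hβi (fun h => hne (congrArg α h)) hβ0 hβ1 ?_)
  intro t ht0 ht1 ht
  obtain ⟨s, hs⟩ := hr (mem_range_self t)
  rcases hγ s with h | h | h
  · exact h (by rwa [hs])
  · exact ht0 (hβi (by rw [hβ0, ← hs, h]))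
  · exact ht1 (hβi (by rw [hβ1, ← hs, h]))

theorem joinedIn_of_image_Icc_subset {X : Type*} [TopologicalSpace X] {ψ : I → X}
    (hψ : Continuous ψ) {s t : I} (hst : s ≤ t) {S : Set X} (h : ∀ u ∈ Icc s t, ψ u ∈ S) :
    JoinedIn S (ψ s) (ψ t) := by
  have hst' : (s : ℝ) ≤ t := hst
  have hpc : IsPathConnected (Icc (s : ℝ) t) :=
    (convex_Icc _ _).isPathConnected (nonempty_Icc.2 hst')
  have hc : Continuous fun v : ℝ => ψ (projIcc 0 1 zero_le_one v) :=
    hψ.comp continuous_projIcc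
  have hJ := (hpc.image hc).joinedIn _ (mem_image_of_mem _ (left_mem_Icc.2 hst')) _
    (mem_image_of_mem _ (right_mem_Icc.2 hst'))
  simp only [projIcc_val] at hJ
  refine hJ.mono ?_
  rintro _ ⟨v, hv, rfl⟩
  refine h _ ?_
  have hv01 : v ∈ Icc (0 : ℝ) 1 := ⟨s.2.1.trans hv.1, hv.2.trans t.2.2⟩
  rw [projIcc_of_mem _ hv01]
  exact ⟨hv.1, hv.2⟩

theorem eq_of_isLastPoint_of_ball {K : Set I} {κ : I → I} (h : IsLastPoint K κ) {t s : I} {δ : ℝ}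
    (hball : ∀ v ∈ K, δ ≤ dist v t) (hs : dist s t < δ) : κ s = κ t := by
  have hs' := abs_lt.1 (by rwa [Subtype.dist_eq, Real.dist_eq] at hs : |(s : ℝ) - t| < δ)
  have key : ∀ v ∈ K, ¬ ((min s t : I) < v ∧ v ≤ max s t) := by
    rintro v hv ⟨h1, h2⟩
    refine (hball v hv).not_gt ?_
    rw [Subtype.dist_eq, Real.dist_eq, abs_lt]
    rcases le_total s t with hst | hst
    · rw [min_eq_left hst] at h1
      rw [max_eq_right hst] at h2
      have h1' : (s : ℝ) < v := h1
      have h2' : (v : ℝ) ≤ t := h2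
      constructor <;> linarith
    · rw [min_eq_right hst] at h1
      rw [max_eq_left hst] at h2
      have h1' : (t : ℝ) < v := h1
      have h2' : (v : ℝ) ≤ s := h2
      constructor <;> linarith
  rcases le_total s t with hst | hst
  · rw [min_eq_left hst, max_eq_right hst] at key
    exact h.eq_of_lt hst (not_lt.1 fun hlt => key _ (h.mem t) ⟨hlt, h.le t⟩)
  · rw [min_eq_right hst, max_eq_left hst] at key
    exact (h.eq_of_lt hst (not_lt.1 fun hlt => key _ (h.mem s) ⟨hlt, h.le s⟩)).symm

/-- A space filling path `ψ`, an arc `α` with the same endpoints, and a retraction `r` onto the arc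
(composed with the inverse of `α`) whose fibres form a null family, such that `ψ` moves from one
fibre to another only along the arc. -/
structure ArcRetraction {X : Type*} [MetricSpace X] (ψ α : I → X) (r : X → I) : Prop where
  continuous_path : Continuous ψ
  surjective : Function.Surjective ψ
  continuous_arc : Continuous α
  continuous_retraction : Continuous r
  source : ψ 0 = α 0
  target : ψ 1 = α 1
  retraction_arc : ∀ x, r (α x) = x
  eventually_eq : ∀ t, ψ t ≠ α (r (ψ t)) → ∀ᶠ s in 𝓝 t, r (ψ s) = r (ψ t)
  finite_fibres : ∀ ε > 0, {x | ∃ t, r (ψ t) = x ∧ ε ≤ dist (ψ t) (α x)}.Finite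

theorem exists_arcRetraction {D : Type*} [MetricSpace D] [CompactSpace D] [ConnectedSpace D]
    [LocallyConnectedSpace D] [Nontrivial D]
    (hD : ¬ ∃ f : AddCircle (1 : ℝ) → D, Topology.IsEmbedding f) :
    ∃ (ψ α : I → D) (r : D → I), ArcRetraction ψ α r := by
  obtain ⟨a, b, hab⟩ := exists_pair_ne D
  obtain ⟨ψ, hψ, hsurj, h0, h1⟩ := exists_continuous_surjective_unitInterval a b
  obtain ⟨α, hα, hαi, -, hα0, hα1⟩ := exists_injective_path hψ (by rwa [h0, h1])
  set A : Set D := range α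
  set K : Set I := ψ ⁻¹' A
  have hA : IsClosed A := (isCompact_range hα).isClosed
  have hKc : IsClosed K := hA.preimage hψ
  have h0K : (0 : I) ∈ K := ⟨0, hα0⟩
  have h1K : (1 : I) ∈ K := ⟨1, hα1⟩
  have hgap : GapConst ψ K := by
    refine ⟨hKc, h0K, h1K, fun u hu v hv huv hgap => ?_⟩
    refine eq_of_joinedIn_compl_arc hD hα hαi hu hv
      (joinedIn_of_image_Icc_subset hψ huv.le fun w hw => ?_)
    rcases hw.1.eq_or_lt with rfl | h1
    · exact .inr (.inl rfl)
    rcases hw.2.eq_or_lt with rfl | h2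
    · exact .inr (.inr rfl)
    exact .inl fun hw => hgap w hw h1 h2
  obtain ⟨κ, hκ⟩ := IsLastPoint.exists_of_isClosed hKc h0K
  have hwd : ∀ t t', ψ t = ψ t' → ψ (κ t) = ψ (κ t') := by
    intro t t' htt'
    by_cases ht : t ∈ K
    · have ht' : t' ∈ K := by
        change ψ t' ∈ A
        rwa [← htt']
      rwa [hκ.eq_self ht, hκ.eq_self ht']
    have ht' : t' ∉ K := fun h => ht (by
      change ψ t ∈ A
      rwa [htt'])
    have hj : ∀ u, ∀ w ∈ Icc (κ u) u, ψ w ∈ Aᶜ ∪ {ψ (κ u)} := by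
      intro u w hw
      by_cases hwK : w ∈ K
      · exact .inr (congrArg ψ (le_antisymm (hκ.max u w hwK hw.2) hw.1))
      · exact .inl hwK
    refine eq_of_joinedIn_compl_arc hD hα hαi (hκ.mem t) (hκ.mem t') ?_
    have j1 := (joinedIn_of_image_Icc_subset hψ (hκ.le t) (hj t)).mono
      (union_subset_union_right _ (by simp : {ψ (κ t)} ⊆ ({ψ (κ t), ψ (κ t')} : Set D)))
    have j2 := (joinedIn_of_image_Icc_subset hψ (hκ.le t') (hj t')).mono
      (union_subset_union_right _ (by simp : {ψ (κ t')} ⊆ ({ψ (κ t), ψ (κ t')} : Set D)))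
    rw [htt'] at j1
    exact j1.trans j2.symm
  have hρ : ∀ t, ∃ x, α x = ψ (κ t) := fun t => hκ.mem t
  choose ρ hρ using hρ
  have hρc : Continuous ρ := by
    rw [(hα.isClosedEmbedding hαi).isEmbedding.continuous_iff]
    exact (hκ.continuous_comp hgap hψ).congr fun t => (hρ t).symm
  let r : D → I := fun y => ρ (Function.surjInv hsurj y)
  have hr : ∀ t, r (ψ t) = ρ t := fun t => hαi (by
    rw [hρ, hρ]
    exact hwd _ _ (Function.surjInv_eq hsurj _))
  have hrc : Continuous r := by
    rw [(hψ.isClosedMap.isQuotientMap hψ hsurj).continuous_iff]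
    exact hρc.congr fun t => (hr t).symm
  have hρK : ∀ t ∈ K, α (ρ t) = ψ t := fun t ht => by rw [hρ, hκ.eq_self ht]
  have hball : ∀ t δ, (∀ v ∈ K, δ ≤ dist v t) → ∀ s, dist s t < δ → ρ s = ρ t :=
    fun t δ h s hs => hαi (by rw [hρ, hρ, eq_of_isLastPoint_of_ball hκ h hs])
  refine ⟨ψ, α, r, hψ, hsurj, hα, hrc, hα0.symm, hα1.symm, fun x => ?_, fun t ht => ?_,
    fun ε hε => ?_⟩
  · obtain ⟨t, ht⟩ := hsurj (α x)
    rw [← ht, hr]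
    exact hαi (by rw [hρK t ⟨x, ht.symm⟩, ht])
  · simp only [hr] at ht ⊢
    have htK : t ∈ Kᶜ := fun h => ht (hρK t h).symm
    obtain ⟨δ, hδ, hsub⟩ := Metric.isOpen_iff.1 hKc.isOpen_compl t htK
    filter_upwards [Metric.ball_mem_nhds t hδ] with s hs
    exact hball t δ (fun v hv => not_lt.1 fun h => hsub h hv) s hs
  · obtain ⟨δ, hδ, H⟩ := Metric.uniformContinuous_iff.1
      (CompactSpace.uniformContinuous_of_continuous hψ) ε hε
    obtain ⟨T, hT⟩ := CompactSpace.elim_nhds_subcover (fun t : I => Metric.ball t δ)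
      (fun t => Metric.ball_mem_nhds t hδ)
    refine (T.finite_toSet.image ρ).subset ?_
    rintro x ⟨t, rfl, ht⟩
    rw [hr] at ht ⊢
    obtain ⟨s, hsT, hs⟩ : ∃ s ∈ T, dist t s < δ := by
      simpa using (hT ▸ mem_univ t : t ∈ ⋃ s ∈ T, Metric.ball s δ)
    refine ⟨s, hsT, hball t δ (fun v hv => ?_) s (by rwa [dist_comm])⟩
    by_contra! hlt
    obtain ⟨v', hv', hv'eq⟩ := hκ.exists_dist_le hgap (t := t) hv
    have := H (hv'.trans_lt hlt)
    rw [hv'eq, ← hρ, dist_comm] at this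
    exact this.not_ge ht

theorem unitInterval.volume_pos_of_mem_nhds {s : Set I} {t : I} (hs : s ∈ 𝓝 t) :
    0 < MeasureTheory.volume s := by
  obtain ⟨U, hUs, hU, htU⟩ := mem_nhds_iff.1 hs
  refine lt_of_lt_of_le ?_ (MeasureTheory.measure_mono hUs)
  obtain ⟨V, hV, rfl⟩ := isOpen_induced_iff.1 hU
  have ht : (t : ℝ) ∈ closure (Ioo (0 : ℝ) 1) := by
    rw [closure_Ioo zero_ne_one]
    exact t.2
  have hne := mem_closure_iff.1 ht V hV htU
  rw [unitInterval.volume_apply]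
  refine ((hV.inter isOpen_Ioo).measure_pos MeasureTheory.volume hne).trans_le
    (MeasureTheory.measure_mono ?_)
  rintro x ⟨hxV, hx⟩
  exact ⟨⟨x, hx.1.le, hx.2.le⟩, hxV, rfl⟩

/-- Every continuous `ρ : I → I` admits pairwise disjoint intervals `[lo x, hi x]` of `I`, ordered
as their indices, nondegenerate when the fibre of `x` has interior, such that the monotone map
collapsing each `[lo x, hi x]` to `x` is `3 / 2`-Lipschitz. -/
theorem exists_lipschitz_collapse {ρ : I → I} (hρ : Continuous ρ) :
    ∃ (lo hi : I → ℝ) (h : ℝ → I), (∀ x, 0 ≤ lo x) ∧ (∀ x, lo x ≤ hi x) ∧ (∀ x, hi x ≤ 1) ∧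
      (∀ t, (∀ᶠ s in 𝓝 t, ρ s = ρ t) → lo (ρ t) < hi (ρ t)) ∧
      (∀ x, ∀ s ∈ Icc (lo x) (hi x), h s = x) ∧ ∀ s t, dist (h s) (h t) ≤ 3 / 2 * dist s t := by
  let m : I → ℝ := fun x => MeasureTheory.volume.real (ρ ⁻¹' Iio x)
  let M : I → ℝ := fun x => MeasureTheory.volume.real (ρ ⁻¹' Iic x)
  have hm0 : ∀ x, 0 ≤ m x := fun x => MeasureTheory.measureReal_nonneg
  have hM1 : ∀ x, M x ≤ 1 := fun x => MeasureTheory.measureReal_le_one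
  have hmM : ∀ x, m x ≤ M x := fun x => MeasureTheory.measureReal_mono
    (preimage_mono Iio_subset_Iic_self)
  have hMm : ∀ x y, x < y → M x ≤ m y := fun x y hxy => MeasureTheory.measureReal_mono
    (preimage_mono (Iic_subset_Iio.2 hxy))
  let lo : I → ℝ := fun x => (2 * x + m x) / 3
  let hi : I → ℝ := fun x => (2 * x + M x) / 3
  have hlohi : ∀ x, lo x ≤ hi x := fun x => by
    have := hmM x
    simp only [lo, hi]
    linarith
  have hlt : ∀ x y : I, x < y → ∀ s ∈ Icc (lo x) (hi x), ∀ t ∈ Icc (lo y) (hi y),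
      (y : ℝ) - x ≤ 3 / 2 * (t - s) := by
    intro x y hxy s hs t ht
    have h1 := hMm x y hxy
    have h2 := hs.2
    have h3 := ht.1
    simp only [lo, hi] at h2 h3
    linarith
  have habs : ∀ x y : I, ∀ s ∈ Icc (lo x) (hi x), ∀ t ∈ Icc (lo y) (hi y),
      dist (x : ℝ) y ≤ 3 / 2 * dist s t := by
    intro x y s hs t ht
    rw [Real.dist_eq, Real.dist_eq]
    rcases lt_trichotomy x y with hxy | rfl | hxy
    · have h1 := hlt x y hxy s hs t ht
      have h2 : (x : ℝ) < y := hxy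
      rw [abs_sub_comm, abs_of_pos (by linarith), abs_sub_comm]
      linarith [le_abs_self (t - s)]
    · simp
    · have h1 := hlt y x hxy t ht s hs
      have h2 : (y : ℝ) < x := hxy
      rw [abs_of_pos (by linarith)]
      linarith [le_abs_self (s - t)]
  let G : Set ℝ := {s | ∃ x, s ∈ Icc (lo x) (hi x)}
  have hG : ∀ s : ℝ, ∃ x : I, s ∈ G → s ∈ Icc (lo x) (hi x) := by
    intro s
    by_cases hs : s ∈ G
    · exact ⟨hs.choose, fun _ => hs.choose_spec⟩
    · exact ⟨0, fun h => absurd h hs⟩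
  choose f hf using hG
  have hfL : LipschitzOnWith (3 / 2) (fun s => (f s : ℝ)) G :=
    LipschitzOnWith.of_dist_le_mul fun s hs t ht => by
      simpa using habs _ _ s (hf s hs) t (hf t ht)
  obtain ⟨g, hg, hgf⟩ := hfL.extend_real
  refine ⟨lo, hi, fun s => projIcc 0 1 zero_le_one (g s), fun x => ?_, hlohi, fun x => ?_,
    fun t ht => ?_, fun x s hs => ?_, fun s t => ?_⟩
  · have := hm0 x
    have := x.2.1
    simp only [lo]
    positivity
  · have := hM1 x
    have := x.2.2
    simp only [hi]
    linarith
  · have hpos : 0 < MeasureTheory.volume.real (ρ ⁻¹' {ρ t}) :=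
      ENNReal.toReal_pos (unitInterval.volume_pos_of_mem_nhds ht).ne'
        (MeasureTheory.measure_ne_top _ _)
    have hsum : M (ρ t) = m (ρ t) + MeasureTheory.volume.real (ρ ⁻¹' {ρ t}) := by
      rw [← MeasureTheory.measureReal_union _
        ((isClosed_singleton.preimage hρ).measurableSet), ← preimage_union, Iio_union_right]
      exact Disjoint.preimage _ (by simp)
    simp only [lo, hi]
    linarith
  · have hsG : s ∈ G := ⟨x, hs⟩
    have hx : f s = x := Subtype.ext (dist_le_zero.1 (by
      simpa using habs _ _ s (hf s hsG) s hs))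
    have hgs : g s = x := (hgf hsG).symm.trans (congrArg Subtype.val hx)
    simp only [hgs, projIcc_val]
  · have := ((LipschitzWith.projIcc (zero_le_one (α := ℝ))).comp hg).dist_le_mul s t
    simpa using this

/-- A parametrisation `φ` of the whole space whose composition with the retraction onto the arc is
Lipschitz with a constant less than two. -/
theorem ArcRetraction.exists_lipschitz_path {X : Type*} [MetricSpace X] {ψ α : I → X} {r : X → I}
    (h : ArcRetraction ψ α r) : ∃ φ : ℝ → X, Continuous φ ∧ (∀ y, ∃ s ∈ Icc (0 : ℝ) 1, φ s = y) ∧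
      ∀ s t, dist (r (φ s)) (r (φ t)) ≤ 3 / 2 * dist s t := by
  classical
  obtain ⟨lo, hi, c, hlo, hlohi, hhi, hpos, hc, hcL⟩ :=
    exists_lipschitz_collapse (h.continuous_retraction.comp h.continuous_path)
  simp only [Function.comp_apply] at hpos
  have hcc : Continuous c := by
    refine (LipschitzWith.of_dist_le_mul (K := 3 / 2) fun s t => ?_).continuous
    simpa using hcL s t
  let e : I → I → X := fun x t => if r (ψ t) = x then ψ t else α x
  have hed : ∀ x t, r (e x t) = x := fun x t => by
    simp only [e]
    split_ifs with hx
    exacts [hx, h.retraction_arc x]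
  have he : ∀ x, Continuous (e x) := by
    intro x
    refine continuous_iff_continuousAt.2 fun t => ?_
    by_cases ht : r (ψ t) = x
    · by_cases hne : ψ t = α x
      · rw [Metric.continuousAt_iff']
        intro ε hε
        filter_upwards [Metric.continuousAt_iff'.1 h.continuous_path.continuousAt ε hε] with s hs
        simp only [e, if_pos ht]
        split_ifs
        · exact hs
        · rwa [hne, dist_self]
      · refine h.continuous_path.continuousAt.congr ?_
        filter_upwards [h.eventually_eq t (by rwa [ht])] with s hs
        simp only [e, if_pos (hs.trans ht)]
    · refine (continuousAt_const (y := α x)).congr ?_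
      filter_upwards [(h.continuous_retraction.comp h.continuous_path).continuousAt.eventually_ne
        ht] with s hs
      exact (if_neg hs).symm
  have he0 : ∀ x, e x 0 = α x := fun x => by
    simp only [e]
    split_ifs with hx
    · rw [h.source, h.retraction_arc] at hx
      rw [h.source, hx]
    · rfl
  have he1 : ∀ x, e x 1 = α x := fun x => by
    simp only [e]
    split_ifs with hx
    · rw [h.target, h.retraction_arc] at hx
      rw [h.target, hx]
    · rfl
  let E : I → ℝ → X := fun x s => e x (projIcc 0 1 zero_le_one ((s - lo x) / (hi x - lo x)))
  have hE : ∀ x, Continuous (E x) := fun x =>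
    (he x).comp (continuous_projIcc.comp ((continuous_id.sub continuous_const).div_const _))
  have hEr : ∀ x s, r (E x s) = x := fun x s => hed _ _
  have hEout : ∀ x s, c s ≠ x → E x s = α x := by
    intro x s hs
    have hs' : s < lo x ∨ hi x < s := by
      by_contra! hcon
      exact hs (hc x s hcon)
    have hle := sub_nonneg.2 (hlohi x)
    simp only [E]
    rcases hs' with hs' | hs'
    · rw [projIcc_of_le_left _ (div_nonpos_of_nonpos_of_nonneg (by linarith) hle)]
      exact he0 x
    · rcases hle.eq_or_lt with heq | hlt
      · rw [← heq, div_zero, projIcc_of_le_left _ le_rfl]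
        exact he0 x
      · rw [projIcc_of_right_le _ ((one_le_div hlt).2 (by linarith))]
        exact he1 x
  have hEbad : ∀ ε > 0, {x | ∃ s, ε ≤ dist (E x s) (α x)}.Finite := by
    intro ε hε
    refine (h.finite_fibres ε hε).subset ?_
    rintro x ⟨s, hs⟩
    simp only [E, e] at hs
    split_ifs at hs with hx
    · exact ⟨_, hx, hs⟩
    · rw [dist_self] at hs
      exact absurd hs hε.not_ge
  refine ⟨fun s => E (c s) s, ?_, fun y => ?_, fun s t => by simpa only [hEr] using hcL s t⟩
  · refine continuous_iff_continuousAt.2 fun s₀ => Metric.continuousAt_iff'.2 fun ε hε => ?_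
    have hε3 : 0 < ε / 3 := by positivity
    have hbad := ((hEbad _ hε3).subset (sdiff_subset (t := {c s₀}))).isClosed.isOpen_compl
    filter_upwards [hcc.continuousAt.eventually (hbad.mem_nhds (by simp)),
      Metric.continuousAt_iff'.1 (hE (c s₀)).continuousAt _ hε3,
      Metric.continuousAt_iff'.1 (h.continuous_arc.comp hcc).continuousAt _ hε3] with s h1 h2 h3
    by_cases hs : c s = c s₀
    · rw [hs]
      linarith
    · have h4 : dist (E (c s) s) (α (c s)) < ε / 3 := by
        by_contra! hcon
        exact h1 ⟨⟨s, hcon⟩, hs⟩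
      rw [hEout _ _ hs] at h2
      simp only [Function.comp_apply] at h3
      linarith [dist_triangle4 (E (c s) s) (α (c s)) (α (c s₀)) (E (c s₀) s₀)]
  · obtain ⟨t, rfl⟩ := h.surjective y
    set x := r (ψ t) with hx
    by_cases hne : ψ t = α x
    · refine ⟨lo x, ⟨hlo x, (hlohi x).trans (hhi x)⟩, ?_⟩
      simp only [hc x _ ⟨le_rfl, hlohi x⟩, E, sub_self, zero_div]
      rw [projIcc_of_le_left _ le_rfl, hne]
      exact he0 x
    · have hlt : lo x < hi x := hpos t (h.eventually_eq t hne)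
      have hd := sub_pos.2 hlt
      have ht0 := mul_nonneg t.2.1 hd.le
      have ht1 := mul_le_mul_of_nonneg_right t.2.2 hd.le
      have hmem : lo x + t * (hi x - lo x) ∈ Icc (lo x) (hi x) := ⟨by linarith, by linarith⟩
      refine ⟨_, ⟨(hlo x).trans hmem.1, hmem.2.trans (hhi x)⟩, ?_⟩
      simp only [hc x _ hmem, E, add_sub_cancel_left, mul_div_cancel_right₀ _ hd.ne',
        projIcc_val]
      exact if_pos hx.symm

/-- Self-maps that factor through a function `r` to the unit interval and contract it uniformly
form a topologically contractive family. -/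
theorem topContractive_of_factor {X : Type*} [MetricSpace X] {F : Set (X → X)} {r : X → I}
    {c : ℝ} (hc0 : 0 ≤ c) (hc1 : c < 1)
    (hr : ∀ f ∈ F, ∀ y z, dist (r (f y)) (r (f z)) ≤ c * dist (r y) (r z))
    (hF : ∀ ε > 0, ∃ δ > 0, ∀ f ∈ F, ∀ y z, dist (r y) (r z) < δ → dist (f y) (f z) ≤ ε) :
    TopContractive F := by
  intro ε hε
  obtain ⟨δ, hδ, hFδ⟩ := hF (ε / 2) (by positivity)
  obtain ⟨k, hk⟩ := exists_pow_lt_of_lt_one hδ hc1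
  have key : ∀ l : List (X → X), (∀ f ∈ l, f ∈ F) → ∀ y z,
      dist (r (l.foldr (· ∘ ·) id y)) (r (l.foldr (· ∘ ·) id z)) ≤ c ^ l.length := by
    intro l hl y z
    induction l with
    | nil => simpa [Subtype.dist_eq] using Real.dist_le_of_mem_Icc_01 (r y).2 (r z).2
    | cons f l ih =>
      rw [List.length_cons, pow_succ']
      exact (hr f (hl f (by simp)) _ _).trans (mul_le_mul_of_nonneg_left
        (ih fun g hg => hl g (by simp [hg])) hc0)
  refine ⟨k + 1, fun l hl hlen => ?_⟩
  cases l with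
  | nil => simp at hlen
  | cons f l =>
    refine (Metric.diam_le_of_forall_dist_le (by positivity) ?_).trans_lt (half_lt_self hε)
    rintro _ ⟨y, rfl⟩ _ ⟨z, rfl⟩
    have hlen' : l.length = k := by simpa using hlen
    exact hFδ f (hl f (by simp)) _ _
      ((key l (fun g hg => hl g (by simp [hg])) y z).trans_lt (by rwa [hlen']))

/-- Every nondegenerate dendrite (a Peano continuum containing no topological copy of a
simple closed curve) is a topological fractal with witnessing number two. -/
theorem dendrite_is_topological_fractal_with_two_maps
    (D : Type*) [MetricSpace D] [CompactSpace D] [ConnectedSpace D]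
    [LocallyConnectedSpace D] [Nonempty D] [Nontrivial D]
    (hD : ¬ ∃ f : AddCircle (1 : ℝ) → D, Topology.IsEmbedding f) :
    ∃ f g : D → D, Continuous f ∧ Continuous g ∧
      TopContractive {f, g} ∧ Set.range f ∪ Set.range g = Set.univ := by
  obtain ⟨ψ, α, r, h⟩ := exists_arcRetraction hD
  obtain ⟨φ, hφ, hsurj, hL⟩ := h.exists_lipschitz_path
  have hrc : Continuous fun y => (r y : ℝ) := continuous_subtype_val.comp h.continuous_retraction
  have hform : ∀ f ∈ ({fun y => φ (r y / 2), fun y => φ ((1 + r y) / 2)} : Set (D → D)),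
      ∃ d ∈ Icc (0 : ℝ) (1 / 2), ∀ y, f y = φ (d + r y / 2) := by
    rintro f (rfl | rfl)
    · exact ⟨0, by norm_num, fun y => by simp⟩
    · exact ⟨1 / 2, by norm_num, fun y => by ring_nf⟩
  have hdist : ∀ (d : ℝ) (y z : D), dist (d + r y / 2) (d + r z / 2) = dist (r y) (r z) / 2 := by
    intro d y z
    rw [Subtype.dist_eq, Real.dist_eq, Real.dist_eq, add_sub_add_left_eq_sub, ← sub_div, abs_div,
      abs_two]
  refine ⟨fun y => φ (r y / 2), fun y => φ ((1 + r y) / 2), by fun_prop, by fun_prop,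
    topContractive_of_factor (r := r) (c := 3 / 4) (by norm_num) (by norm_num) ?_ ?_, ?_⟩
  · intro f hf y z
    obtain ⟨d, -, hd⟩ := hform f hf
    rw [hd, hd]
    refine (hL _ _).trans_eq ?_
    rw [hdist]
    ring
  · intro ε hε
    obtain ⟨δ, hδ, H⟩ := Metric.uniformContinuousOn_iff.1
      (isCompact_Icc.uniformContinuousOn_of_continuous (s := Icc (0 : ℝ) 1) hφ.continuousOn) ε hε
    refine ⟨δ, hδ, fun f hf y z hyz => ?_⟩
    obtain ⟨d, ⟨hd0, hd1⟩, hd⟩ := hform f hf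
    have hmem : ∀ y, d + (r y : ℝ) / 2 ∈ Icc (0 : ℝ) 1 := fun y => by
      have := (r y).2.1
      have := (r y).2.2
      constructor <;> linarith
    rw [hd, hd]
    refine (H _ (hmem y) _ (hmem z) ?_).le
    rw [hdist]
    linarith [dist_nonneg (x := r y) (y := r z)]
  · refine eq_univ_of_forall fun y => ?_
    obtain ⟨s, hs, rfl⟩ := hsurj y
    rcases le_total s (1 / 2) with hle | hle
    · refine .inl ⟨α ⟨2 * s, by linarith [hs.1], by linarith⟩, ?_⟩
      simp [h.retraction_arc]
    · refine .inr ⟨α ⟨2 * s - 1, by linarith, by linarith [hs.2]⟩, ?_⟩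
      simp [h.retraction_arc]
end

section
/- Let X be a compact metric space, let f_1, ..., f_n and g_1, ..., g_m be continuous self-maps of X. Suppose that the family {f_1, ..., f_n} is topologically contractive and that for every map f that is a (possibly empty, i.e., the identity) finite composition of maps from {f_1, ..., f_n} and for all 1 ≤ i, j ≤ m, the composition g_i ∘ f ∘ g_j is a constant map. Then the family {f_1, ..., f_n, g_1, ..., g_m} is topologically contractive. -/
theorem List.foldr_comp_append {X : Type*} (a b : List (X → X)) :
    (a ++ b).foldr (· ∘ ·) id = a.foldr (· ∘ ·) id ∘ b.foldr (· ∘ ·) id := by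
  induction a with
  | nil => rfl
  | cons h t ih => simp only [List.cons_append, List.foldr_cons, ih, Function.comp_assoc]

theorem List.forall_mem_or_exists_eq_append_cons {α : Type*} (p : α → Prop) (l : List α) :
    (∀ x ∈ l, p x) ∨ ∃ a h b, l = a ++ h :: b ∧ (∀ x ∈ a, p x) ∧ ¬ p h := by
  induction l with
  | nil => simp
  | cons y t ih =>
    by_cases hy : p y
    · rcases ih with ih | ⟨a, h, b, rfl, ha, hh⟩
      · left
        simpa [hy] using ih
      · exact Or.inr ⟨y :: a, h, b, rfl, by simpa [hy] using ha, hh⟩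
    · exact Or.inr ⟨[], y, t, rfl, by simp, hy⟩

/-- Words of bounded length in a finite family of continuous self-maps of a compact metric
space are uniformly equicontinuous. -/
theorem Set.Finite.exists_delta_foldr_comp {X : Type*} [MetricSpace X] [CompactSpace X]
    {F : Set (X → X)} (hF : F.Finite) (hc : ∀ f ∈ F, Continuous f) (k : ℕ) :
    ∀ ε > (0 : ℝ), ∃ δ > (0 : ℝ), ∀ l : List (X → X), (∀ f ∈ l, f ∈ F) → l.length ≤ k →
      ∀ x y, dist x y < δ → dist (l.foldr (· ∘ ·) id x) (l.foldr (· ∘ ·) id y) < ε := by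
  induction k with
  | zero =>
    intro ε hε
    refine ⟨ε, hε, fun l _ hl x y hxy => ?_⟩
    obtain rfl : l = [] := List.length_eq_zero_iff.mp (Nat.le_zero.mp hl)
    exact hxy
  | succ k ih =>
    intro ε hε
    have := hF.to_subtype
    have hequi : UniformEquicontinuous (fun f : F => (f : X → X)) :=
      uniformEquicontinuous_finite.mpr fun f =>
        CompactSpace.uniformContinuous_of_continuous (hc f f.2)
    obtain ⟨η, hη, hF'⟩ := Metric.uniformEquicontinuous_iff.mp hequi ε hε
    obtain ⟨δ, hδ, h⟩ := ih (min ε η) (lt_min hε hη)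
    refine ⟨min ε δ, lt_min hε hδ, fun l hl hlen x y hxy => ?_⟩
    cases l with
    | nil => exact hxy.trans_le (min_le_left _ _)
    | cons f t =>
      have ht := h t (fun f' hf' => hl f' (List.mem_cons_of_mem _ hf'))
        (Nat.le_of_succ_le_succ hlen) x y (hxy.trans_le (min_le_right _ _))
      exact hF' _ _ (ht.trans_le (min_le_right _ _)) ⟨f, hl f List.mem_cons_self⟩

theorem diam_range_foldr_comp_append_le {X : Type*} [MetricSpace X] [CompactSpace X]
    (a b : List (X → X)) :
    Metric.diam (Set.range ((a ++ b).foldr (· ∘ ·) id)) ≤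
      Metric.diam (Set.range (a.foldr (· ∘ ·) id)) := by
  rw [List.foldr_comp_append]
  exact Metric.diam_mono (Set.range_comp_subset_range _ _) (Metric.isBounded_of_compactSpace)

theorem TopContractive.exists_forall_le_length {X : Type*} [MetricSpace X] [CompactSpace X]
    {F : Set (X → X)} (hF : TopContractive F) {ε : ℝ} (hε : 0 < ε) :
    ∃ k : ℕ, ∀ l : List (X → X), (∀ f ∈ l, f ∈ F) → k ≤ l.length →
      Metric.diam (Set.range (l.foldr (· ∘ ·) id)) < ε := by
  obtain ⟨k, hk⟩ := hF ε hε
  refine ⟨k, fun l hl hlen => ?_⟩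
  have hle := diam_range_foldr_comp_append_le (l.take k) (l.drop k)
  rw [List.take_append_drop] at hle
  exact hle.trans_lt
    (hk _ (fun f hf => hl f (List.mem_of_mem_take hf)) (List.length_take_of_le hlen))

/-- If `{f_1, …, f_n}` is topologically contractive and `g_i ∘ f ∘ g_j` is constant for
every finite (possibly empty) composition `f` of maps from `{f_1, …, f_n}` and all
`i, j`, then `{f_1, …, f_n, g_1, …, g_m}` is topologically contractive. -/
theorem topContractive_union_of_constant_compositions
    {X : Type*} [MetricSpace X] [CompactSpace X]
    {n m : ℕ} (f : Fin n → X → X) (g : Fin m → X → X)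
    (hfc : ∀ i, Continuous (f i)) (hgc : ∀ j, Continuous (g j))
    (hcontr : TopContractive (Set.range f))
    (hconst : ∀ l : List (X → X), (∀ h ∈ l, h ∈ Set.range f) →
      ∀ i j, ∃ c : X, ∀ x, g i ((l.foldr (· ∘ ·) id) (g j x)) = c) :
    TopContractive (Set.range f ∪ Set.range g) := by
  intro ε hε
  obtain ⟨k, hk⟩ := hcontr.exists_forall_le_length hε
  obtain ⟨δ, hδ, hequi⟩ := ((Set.finite_range f).union (Set.finite_range g)).exists_delta_foldr_comp
    (by rintro _ (⟨i, rfl⟩ | ⟨j, rfl⟩); exacts [hfc i, hgc j]) (k + 1) (ε / 2) (half_pos hε)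
  obtain ⟨k', hk'⟩ := hcontr.exists_forall_le_length hδ
  refine ⟨k + 1 + k', fun l hl hlen => ?_⟩
  rcases l.forall_mem_or_exists_eq_append_cons (· ∈ Set.range f) with
    hlf | ⟨u, p, v, rfl, hu, hp⟩
  · exact hk l hlf (by omega)
  rcases le_or_gt k u.length with hku | hku
  · exact (diam_range_foldr_comp_append_le _ _).trans_lt (hk u hu hku)
  obtain ⟨i, rfl⟩ := (hl p (by simp)).resolve_left hp
  simp only [List.length_append, List.length_cons] at hlen
  rcases v.forall_mem_or_exists_eq_append_cons (· ∈ Set.range f) with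
    hv | ⟨w, q, t, rfl, hw, hq⟩
  · refine (Metric.diam_le_of_forall_dist_le (half_pos hε).le ?_).trans_lt (half_lt_self hε)
    rintro _ ⟨x, rfl⟩ _ ⟨y, rfl⟩
    rw [List.append_cons, List.foldr_comp_append]
    refine (hequi (u ++ [g i]) (fun h hh => hl h ?_) (by simp; omega) _ _ ?_).le
    · rw [List.append_cons]
      exact List.mem_append_left _ hh
    · exact (Metric.dist_le_diam_of_mem Metric.isBounded_of_compactSpace
        (Set.mem_range_self x) (Set.mem_range_self y)).trans_lt (hk' v hv (by omega))
  · obtain ⟨j, rfl⟩ := (hl q (by simp)).resolve_left hq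
    obtain ⟨c, hc⟩ := hconst w hw i j
    rw [Metric.diam_subsingleton]
    · exact hε
    rintro _ ⟨x, rfl⟩ _ ⟨y, rfl⟩
    simp only [List.foldr_comp_append, List.foldr_cons, Function.comp_apply, hc]
end

section
/- Let X be a Peano continuum and let K_n ⊆ X, for n ∈ ℕ, be pairwise disjoint subcontinua each of whose topological boundaries has at most 13 points. Then diam K_n converges to zero as n → ∞. -/
open Set Filter Topology MeasureTheory

/-- A preconnected set meeting both a set and its complement meets the frontier of that set. -/
theorem IsPreconnected.inter_frontier_nonempty_of_inter_of_diff {X : Type*} [TopologicalSpace X]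
    {s u : Set X} (hu : IsPreconnected u) (hus : (u ∩ s).Nonempty) (hdiff : (u \ s).Nonempty) :
    (u ∩ frontier s).Nonempty := by
  by_contra hempty
  have hmem (x : X) (hx : x ∈ u) (hcl : x ∈ closure s) : x ∈ interior s := by
    by_contra hint
    exact hempty ⟨x, hx, hcl, hint⟩
  obtain ⟨y, hy, hys⟩ := hus
  obtain ⟨z, hz, hzs⟩ := hdiff
  obtain ⟨w, _, hwi, hwc⟩ := hu (interior s) (closure s)ᶜ isOpen_interior
    isClosed_closure.isOpen_compl (fun x hx => (em (x ∈ closure s)).imp (hmem x hx) id)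
    ⟨y, hy, hmem y hy (subset_closure hys)⟩
    ⟨z, hz, fun hcl => hzs (interior_subset (hmem z hz hcl))⟩
  exact hwc (subset_closure (interior_subset hwi))

/-- A preconnected set contained in the union of finitely many balls of radius `δ` has diameter at
most `2 δ` times the number of balls. -/
theorem IsPreconnected.diam_le_of_subset_biUnion_ball {X : Type*} [MetricSpace X] {s : Set X}
    (hs : IsPreconnected s) (t : Finset X) {δ : ℝ} (hδ : 0 ≤ δ)
    (hst : s ⊆ ⋃ p ∈ t, Metric.ball p δ) : Metric.diam s ≤ t.card * (2 * δ) := by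
  refine Metric.diam_le_of_forall_dist_le (by positivity) fun x hx y hy => ?_
  have himage : IsPreconnected (dist x '' s) := hs.image _ (by fun_prop)
  have hIcc : Icc 0 (dist x y) ⊆ dist x '' s :=
    himage.Icc_subset ⟨x, hx, dist_self x⟩ ⟨y, hy, rfl⟩
  have hcover : Icc 0 (dist x y) ⊆ ⋃ p ∈ t, Icc (dist x p - δ) (dist x p + δ) := by
    intro r hr
    obtain ⟨z, hz, rfl⟩ := hIcc hr
    obtain ⟨p, hp, hzp⟩ := mem_iUnion₂.1 (hst hz)
    have hzp' : dist z p < δ := hzp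
    refine mem_iUnion₂.2 ⟨p, hp, ?_, ?_⟩
    · linarith [dist_triangle x z p]
    · linarith [dist_triangle_right x z p]
  have hvol : volume (Icc 0 (dist x y)) ≤
      ∑ p ∈ t, volume (Icc (dist x p - δ) (dist x p + δ)) :=
    (measure_mono hcover).trans (measure_biUnion_finset_le _ _)
  have hlen (p : X) : dist x p + δ - (dist x p - δ) = 2 * δ := by ring
  simp only [Real.volume_Icc, hlen, sub_zero, Finset.sum_const, ← ENNReal.ofReal_nsmul] at hvol
  rw [ENNReal.ofReal_le_ofReal_iff (by positivity)] at hvol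
  simpa using hvol

/-- A compact locally connected metric space is covered by finitely many connected sets of small
diameter. -/
theorem exists_finset_isConnected_cover (X : Type*) [MetricSpace X] [CompactSpace X]
    [LocallyConnectedSpace X] {δ : ℝ} (hδ : 0 < δ) :
    ∃ (t : Finset X) (U : X → Set X), (∀ x, IsConnected (U x)) ∧
      (∀ x, ∀ y ∈ U x, ∀ z ∈ U x, dist y z < δ) ∧ ⋃ x ∈ t, U x = univ := by
  have hsmall (x : X) : ∃ V ⊆ Metric.ball x (δ / 2), IsOpen V ∧ x ∈ V ∧ IsConnected V :=
    locallyConnectedSpace_iff_subsets_isOpen_isConnected.1 inferInstance x _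
      (Metric.ball_mem_nhds x (half_pos hδ))
  choose U hball hopen hmem hconn using hsmall
  obtain ⟨t, ht⟩ := CompactSpace.elim_nhds_subcover U fun x => (hopen x).mem_nhds (hmem x)
  refine ⟨t, U, hconn, fun x y hy z hz => ?_, by simpa using ht⟩
  have hy' : dist y x < δ / 2 := hball x hy
  have hz' : dist z x < δ / 2 := hball x hz
  linarith [dist_triangle_right y z x]

/-- In a compact locally connected metric space, all but finitely many members of a pairwise
disjoint family lie in the `δ`-neighbourhoods of their frontiers. -/
theorem eventually_subset_biUnion_ball_frontier {X : Type*} [MetricSpace X] [CompactSpace X]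
    [LocallyConnectedSpace X] {ι : Type*} {K : ι → Set X}
    (hdisj : Pairwise fun m n => Disjoint (K m) (K n)) {δ : ℝ} (hδ : 0 < δ) :
    ∀ᶠ n in cofinite, K n ⊆ ⋃ p ∈ frontier (K n), Metric.ball p δ := by
  obtain ⟨t, U, hconn, hdist, hcover⟩ := exists_finset_isConnected_cover X hδ
  have hnot : ∀ᶠ n in cofinite, ∀ x ∈ t, ¬ U x ⊆ K n := by
    rw [Filter.eventually_all_finset]
    intro x _
    rw [Filter.eventually_cofinite]
    refine Set.Subsingleton.finite fun m hm n hn => ?_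
    obtain ⟨y, hy⟩ := (hconn x).nonempty
    by_contra hmn
    exact Set.disjoint_left.1 (hdisj hmn) (not_not.1 hm hy) (not_not.1 hn hy)
  filter_upwards [hnot] with n hn y hy
  obtain ⟨x, hx, hyx⟩ := mem_iUnion₂.1 (hcover.ge (mem_univ y))
  obtain ⟨z, hz, hzK⟩ := not_subset.1 (hn x hx)
  obtain ⟨p, hpU, hp⟩ := (hconn x).isPreconnected.inter_frontier_nonempty_of_inter_of_diff
    ⟨y, hyx, hy⟩ ⟨z, hz, hzK⟩
  exact mem_iUnion₂.2 ⟨p, hp, hdist x y hyx p hpU⟩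

/-- In a Peano continuum, if `K n`, `n ∈ ℕ`, are pairwise disjoint subcontinua whose
boundaries have at most 13 points, then `diam (K n)` converges to zero. -/
theorem diam_tendsto_zero_of_pairwise_disjoint_subcontinua
    {X : Type*} [MetricSpace X] [CompactSpace X] [ConnectedSpace X]
    [LocallyConnectedSpace X] [Nonempty X]
    (K : ℕ → Set X)
    (hne : ∀ n, (K n).Nonempty)
    (hcomp : ∀ n, IsCompact (K n))
    (hconn : ∀ n, IsConnected (K n))
    (hdisj : Pairwise fun m n => Disjoint (K m) (K n))
    (hbd : ∀ n, (frontier (K n)).encard ≤ 13) :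
    Filter.Tendsto (fun n => Metric.diam (K n)) Filter.atTop (nhds 0) := by
  rw [Metric.tendsto_nhds]
  intro ε hε
  rw [← Nat.cofinite_eq_atTop]
  filter_upwards [eventually_subset_biUnion_ball_frontier hdisj (δ := ε / 27) (by positivity)]
    with n hn
  have hfin : (frontier (K n)).Finite := Set.finite_of_encard_le_coe (hbd n)
  have hcard : hfin.toFinset.card ≤ 13 := by
    have h := hbd n
    rw [hfin.encard_eq_coe_toFinset_card] at h
    exact_mod_cast h
  have hcard' : (hfin.toFinset.card : ℝ) ≤ 13 := by exact_mod_cast hcard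
  have hdiam := (hconn n).isPreconnected.diam_le_of_subset_biUnion_ball hfin.toFinset
    (δ := ε / 27) (by positivity) (by simpa using hn)
  rw [Real.dist_0_eq_abs, abs_of_nonneg Metric.diam_nonneg]
  nlinarith
end

section
/- Let X be a Peano continuum and let U ⊆ X be a nonempty open connected set whose topological boundary is finite. Then the closure of U is a Peano (i.e., locally connected) subcontinuum of X. -/
open Set Topology

/-- A connected set meeting the frontier of an open set `U` in at most one of its points `x`,
where `x ∈ closure U`, has connected trace on `closure U`. -/
theorem IsPreconnected.inter_closure_of_frontier_subset_singleton {X : Type*} [TopologicalSpace X]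
    {U C : Set X} {x : X} (ho : IsOpen U) (hC : IsPreconnected C) (hxC : x ∈ C)
    (hxU : x ∈ closure U) (hfr : C ∩ frontier U ⊆ {x}) :
    IsPreconnected (C ∩ closure U) := by
  have key : ∀ u v : Set X, IsOpen u → IsOpen v → C ∩ closure U ⊆ u ∪ v →
      C ∩ closure U ∩ (u ∩ v) = ∅ → x ∈ u → C ∩ closure U ⊆ u := by
    intro u v hu hv hcover hdisj hxu
    have hd : ∀ y ∈ C, y ∈ closure U → y ∈ u → y ∉ v := fun y h₁ h₂ h₃ h₄ =>
      (hdisj ▸ (⟨⟨h₁, h₂⟩, h₃, h₄⟩ : y ∈ C ∩ closure U ∩ (u ∩ v)) : y ∈ (∅ : Set X))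
    have hcover' : C ⊆ (v ∩ U) ∪ (u ∪ (closure U)ᶜ) := by
      intro y hy
      by_cases hyK : y ∈ closure U
      · by_cases hyu : y ∈ u
        · exact Or.inr (Or.inl hyu)
        · refine Or.inl ⟨(hcover ⟨hy, hyK⟩).resolve_left hyu, ?_⟩
          by_contra hyU
          have hyx : y = x := hfr ⟨hy, hyK, fun h => hyU (interior_subset h)⟩
          exact hyu (hyx ▸ hxu)
      · exact Or.inr (Or.inr hyK)
    have hdisj' : C ∩ ((v ∩ U) ∩ (u ∪ (closure U)ᶜ)) = ∅ := by
      refine eq_empty_of_forall_notMem fun y hy => ?_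
      obtain ⟨hyC, ⟨hyv, hyU⟩, hy⟩ := hy
      have hyK := subset_closure hyU
      exact hd y hyC hyK (hy.resolve_right fun h => h hyK) hyv
    rcases isPreconnected_iff_subset_of_disjoint.mp hC _ _ (hv.inter ho)
        (hu.union isClosed_closure.isOpen_compl) hcover' hdisj' with h | h
    · exact absurd (h hxC).1 (hd x hxC hxU hxu)
    · exact fun y hy => (h hy.1).resolve_right fun h' => h' hy.2
  refine isPreconnected_iff_subset_of_disjoint.mpr fun u v hu hv hcover hdisj => ?_
  rcases hcover ⟨hxC, hxU⟩ with hx | hx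
  · exact Or.inl (key u v hu hv hcover hdisj hx)
  · exact Or.inr (key v u hv hu (union_comm u v ▸ hcover) (inter_comm u v ▸ hdisj) hx)

/-- In a locally connected T₁ space, the closure of an open set with finite frontier is
locally connected. -/
theorem IsOpen.locallyConnectedSpace_closure_of_finite_frontier {X : Type*} [TopologicalSpace X]
    [T1Space X] [LocallyConnectedSpace X] {U : Set X} (ho : IsOpen U)
    (hfr : (frontier U).Finite) : LocallyConnectedSpace (closure U) := by
  refine locallyConnectedSpace_iff_connected_subsets.mpr fun x V hV => ?_
  obtain ⟨N, hN, hNV⟩ := mem_nhds_induced _ x V |>.mp hV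
  have hV' : N ∩ (frontier U \ {x.1})ᶜ ∈ 𝓝 x.1 :=
    Filter.inter_mem hN ((hfr.subset sdiff_subset).isClosed.isOpen_compl.mem_nhds
      fun h => h.2 rfl)
  set C := connectedComponentIn (N ∩ (frontier U \ {x.1})ᶜ) x.1
  have hCsub : C ⊆ N ∩ (frontier U \ {x.1})ᶜ := connectedComponentIn_subset _ _
  refine ⟨Subtype.val ⁻¹' C,
    continuous_subtype_val.continuousAt.preimage_mem_nhds (connectedComponentIn_mem_nhds hV'),
    ?_, fun y hy => hNV (hCsub hy).1⟩
  rw [← IsInducing.subtypeVal.isPreconnected_image, Subtype.image_preimage_coe, inter_comm]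
  refine isPreconnected_connectedComponentIn.inter_closure_of_frontier_subset_singleton ho
    (mem_connectedComponentIn (mem_of_mem_nhds hV')) x.2 fun y hy => ?_
  by_contra hyx
  exact (hCsub hy.1).2 ⟨hy.2, hyx⟩

/-- In a Peano continuum, the closure of a nonempty open connected set with finite
boundary is a Peano (locally connected) subcontinuum. -/
theorem closure_of_open_connected_finite_boundary_is_peano_subcontinuum
    {X : Type*} [MetricSpace X] [CompactSpace X] [ConnectedSpace X]
    [LocallyConnectedSpace X] [Nonempty X]
    (U : Set X) (hne : U.Nonempty) (ho : IsOpen U) (hc : IsConnected U)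
    (hfr : (frontier U).Finite) :
    IsCompact (closure U) ∧ IsConnected (closure U) ∧
      LocallyConnectedSpace (closure U) :=
  ⟨isClosed_closure.isCompact, hc.closure,
    ho.locallyConnectedSpace_closure_of_finite_frontier hfr⟩
end

section
/- Let X be a connected Hausdorff space and let x ∈ X be such that X \ {x} can be written as a disjoint union of n nonempty open sets for some n ∈ ℕ. Then the Menger order of x in X is at least n; equivalently, if x has a neighborhood basis consisting of sets whose boundaries have at most m points, then m ≥ n. -/
/-- In a connected space, if `{x}ᶜ` is a disjoint union of open sets, then the frontier of a
neighborhood of `x` meets every piece that is not contained in the neighborhood. -/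
theorem nonempty_inter_frontier_of_complement_split {X ι : Type*} [TopologicalSpace X]
    [ConnectedSpace X] {x : X} {A : ι → Set X} (hopen : ∀ i, IsOpen (A i))
    (hdisj : Pairwise fun i j => Disjoint (A i) (A j)) (hcover : (⋃ i, A i) = ({x}ᶜ : Set X))
    {V : Set X} (hV : V ∈ nhds x) {i : ι} {a : X} (ha : a ∈ A i) (haV : a ∉ V) :
    (A i ∩ frontier V).Nonempty := by
  by_contra hempty
  have hint {y : X} (hy : y ∈ A i) (hyV : y ∈ closure V) : y ∈ interior V := by
    by_contra h
    exact hempty ⟨y, hy, hyV, h⟩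
  have hcompl : (A i \ closure V)ᶜ = interior V ∪ ⋃ j, ⋃ (_ : j ≠ i), A j := by
    ext y
    simp only [Set.mem_compl_iff, Set.mem_sdiff, not_and, not_not, Set.mem_union, Set.mem_iUnion,
      exists_prop]
    constructor
    · intro h
      by_cases hyx : y = x
      · exact .inl (hyx ▸ mem_interior_iff_mem_nhds.2 hV)
      · have hy : y ∈ ⋃ j, A j := hcover ▸ hyx
        obtain ⟨j, hj⟩ := Set.mem_iUnion.1 hy
        by_cases hji : j = i
        · subst hji
          exact .inl (hint hj (h hj))
        · exact .inr ⟨j, hji, hj⟩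
    · rintro (h | ⟨j, hji, hj⟩) hyi
      · exact subset_closure (interior_subset h)
      · exact (Set.disjoint_left.1 (hdisj hji) hj hyi).elim
  have hclopen : IsClopen (A i \ closure V) := by
    refine ⟨⟨?_⟩, (hopen i).sdiff isClosed_closure⟩
    rw [hcompl]
    exact isOpen_interior.union (isOpen_iUnion fun j => isOpen_iUnion fun _ => hopen j)
  have huniv : A i \ closure V = Set.univ :=
    hclopen.eq_univ ⟨a, ha, fun h => haV (interior_subset (hint ha h))⟩
  have hx : x ∈ A i \ closure V := huniv ▸ Set.mem_univ x
  exact hx.2 (subset_closure (mem_of_mem_nhds hV))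

/-- If `X` is a connected Hausdorff space and `X \ {x}` is a disjoint union of `n`
nonempty open sets, then the Menger order of `x` is at least `n`: whenever `x` has a
neighborhood basis consisting of sets whose boundaries have at most `m` points, then
`m ≥ n`. -/
theorem menger_order_ge_of_complement_split
    {X : Type*} [TopologicalSpace X] [ConnectedSpace X] [T2Space X]
    (x : X) (n : ℕ) (A : Fin n → Set X)
    (hopen : ∀ i, IsOpen (A i))
    (hne : ∀ i, (A i).Nonempty)
    (hdisj : Pairwise fun i j => Disjoint (A i) (A j))
    (hcover : (⋃ i, A i) = ({x}ᶜ : Set X))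
    (m : ℕ)
    (hbasis : ∀ U ∈ nhds x, ∃ V ∈ nhds x, V ⊆ U ∧ (frontier V).encard ≤ m) :
    n ≤ m := by
  choose a ha using hne
  have hax (i : Fin n) : a i ≠ x := by
    have h : a i ∈ ⋃ i, A i := Set.mem_iUnion.2 ⟨i, ha i⟩
    rw [hcover] at h
    exact h
  obtain ⟨V, hV, hVU, hcard⟩ := hbasis (Set.range a)ᶜ
    ((Set.finite_range a).isClosed.isOpen_compl.mem_nhds fun ⟨i, hi⟩ => hax i hi)
  have key (i : Fin n) : (A i ∩ frontier V).Nonempty :=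
    nonempty_inter_frontier_of_complement_split hopen hdisj hcover hV (ha i)
      fun h => hVU h ⟨i, rfl⟩
  choose b hbA hbV using key
  have hb : Function.Injective b := fun i j hij => by
    by_contra hne
    exact Set.disjoint_left.1 (hdisj hne) (hbA i) (hij ▸ hbA j)
  have hn : (n : ℕ∞) ≤ (frontier V).encard := calc
    (n : ℕ∞) = (Set.range b).encard := by
      rw [← Set.image_univ, hb.encard_image, Set.encard_univ, ENat.card_eq_coe_fintype_card,
        Fintype.card_fin]
    _ ≤ (frontier V).encard := Set.encard_le_encard (Set.range_subset_iff.2 hbV)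
  exact_mod_cast hn.trans hcard
end

section
/- Let X be a Peano continuum with uncountably many cut points. Then there exist pairwise disjoint nondegenerate Peano subcontinua L, R, and X_s for every finite 0-1 sequence s ∈ 2^{<ω}, points l, r, l(s), r(s) ∈ X, and a homeomorphism h : 2^ω → C onto a subset C ⊆ X (where 2^ω is the Cantor space of infinite 0-1 sequences) such that: L ∩ C = {l}; R ∩ C = {r}; X_s ∩ C = {l(s), r(s)} for every s; h(0,0,0,...) = l and h(1,1,1,...) = r; h(s⌢1⌢(0,0,0,...)) = r(s) and h(s⌢0⌢(1,1,1,...)) = l(s) for every s, where ⌢ denotes concatenation; and X = L ∪ R ∪ C ∪ ⋃_{s∈2^{<ω}} X_s. -/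
/-- `x` is a cut point of the connected space `X` if `X \ {x}` is not connected. -/
def IsCutPoint {X : Type*} [TopologicalSpace X] (x : X) : Prop :=
  ¬ IsPreconnected ({x}ᶜ : Set X)

/-- Concatenation of a finite 0-1 sequence with an infinite 0-1 sequence. -/
def catSeq (s : List Bool) (t : ℕ → Bool) : ℕ → Bool :=
  fun i => if h : i < s.length then s.get ⟨i, h⟩ else t (i - s.length)

open Set Filter Topology

section Separation

variable {X : Type*} [TopologicalSpace X]

/-- The open sets `U` and `V` partition the complement of the point `x`. -/
structure IsSeparationAt (x : X) (U V : Set X) : Prop where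
  isOpen_left : IsOpen U
  isOpen_right : IsOpen V
  disjoint : Disjoint U V
  union_eq : U ∪ V = {x}ᶜ

namespace IsSeparationAt

variable {x y : X} {U V : Set X}

theorem symm (h : IsSeparationAt x U V) : IsSeparationAt x V U :=
  ⟨h.isOpen_right, h.isOpen_left, h.disjoint.symm, by rw [union_comm, h.union_eq]⟩

theorem notMem_left (h : IsSeparationAt x U V) : x ∉ U := fun hx =>
  (h.union_eq.le (Or.inl hx) : x ∈ ({x}ᶜ : Set X)) rfl

theorem notMem_right (h : IsSeparationAt x U V) : x ∉ V := h.symm.notMem_left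

theorem notMem_right_of_mem_left (h : IsSeparationAt x U V) (hy : y ∈ U) : y ∉ V :=
  fun hy' => h.disjoint.le_bot ⟨hy, hy'⟩

theorem notMem_left_of_mem_right (h : IsSeparationAt x U V) (hy : y ∈ V) : y ∉ U :=
  h.symm.notMem_right_of_mem_left hy

theorem mem_or_mem (h : IsSeparationAt x U V) (hy : y ≠ x) : y ∈ U ∨ y ∈ V :=
  h.union_eq.ge hy

theorem eq_of_notMem (h : IsSeparationAt x U V) (hU : y ∉ U) (hV : y ∉ V) : y = x := by
  by_contra hy
  exact (h.mem_or_mem hy).elim hU hV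

theorem compl_right (h : IsSeparationAt x U V) : Vᶜ = insert x U := by
  ext y
  constructor
  · intro hy
    by_cases hU : y ∈ U
    · exact Or.inr hU
    · exact Or.inl (h.eq_of_notMem hU hy)
  · rintro (rfl | hy)
    · exact h.notMem_right
    · exact h.notMem_right_of_mem_left hy

open Classical in
/-- Collapsing one side of a separation to the separating point is continuous. -/
theorem continuous_collapse (h : IsSeparationAt x U V) :
    Continuous fun y => if y ∈ U then x else y := by
  refine Continuous.if (fun y hy => ?_) continuous_const continuous_id
  have hcl : closure U ⊆ Vᶜ :=
    closure_minimal (fun z hz => h.notMem_right_of_mem_left hz) h.isOpen_right.isClosed_compl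
  refine (h.eq_of_notMem (fun hU => ?_) (hcl hy.1)).symm
  exact hy.2 (h.isOpen_left.interior_eq.symm ▸ hU)

end IsSeparationAt

/-- A retract of a compact connected locally connected space inherits these properties. -/
theorem isPeano_of_retract [CompactSpace X] [ConnectedSpace X] [LocallyConnectedSpace X]
    {M : Set X} {f : X → X} (hf : Continuous f) (hM : ∀ x, f x ∈ M) (hid : ∀ x ∈ M, f x = x) :
    IsCompact M ∧ IsConnected M ∧ LocallyConnectedSpace M := by
  have hrange : range f = M :=
    Subset.antisymm (range_subset_iff.2 hM) fun x hx => ⟨x, hid x hx⟩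
  refine ⟨hrange ▸ isCompact_range hf, hrange ▸ isConnected_range hf, ?_⟩
  have hq : IsQuotientMap (fun x => (⟨f x, hM x⟩ : M)) :=
    IsQuotientMap.of_inverse continuous_subtype_val (hf.subtype_mk hM)
      fun x => Subtype.ext (hid x x.2)
  exact hq.isCoinducing.locallyConnectedSpace

theorem IsSeparationAt.isPeano_compl_left [CompactSpace X] [ConnectedSpace X]
    [LocallyConnectedSpace X] {x : X} {U V : Set X} (h : IsSeparationAt x U V) :
    IsCompact Uᶜ ∧ IsConnected Uᶜ ∧ LocallyConnectedSpace (Uᶜ : Set X) := by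
  classical
  refine isPeano_of_retract h.continuous_collapse (fun y => ?_) fun y hy => if_neg hy
  by_cases hy : y ∈ U
  · simpa [hy] using h.notMem_left
  · simp [hy]

/-- The intersection of a decreasing sequence of compact connected sets is connected. -/
theorem isPreconnected_iInter_of_antitone [T2Space X] [CompactSpace X] {M : ℕ → Set X}
    (hanti : Antitone M) (hclosed : ∀ n, IsClosed (M n)) (hconn : ∀ n, IsPreconnected (M n)) :
    IsPreconnected (⋂ n, M n) := by
  rw [isPreconnected_iff_subset_of_fully_disjoint_closed (isClosed_iInter hclosed)]
  intro u v hu hv huv hdisj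
  obtain ⟨O₁, O₂, hO₁, hO₂, hu₁, hv₂, hO⟩ := normal_separation hu hv hdisj
  obtain ⟨n, hn⟩ : ∃ n, M n ⊆ O₁ ∪ O₂ :=
    exists_subset_nhds_of_isCompact hanti.directed_ge (fun n => (hclosed n).isCompact)
      fun x hx => (hO₁.union hO₂).mem_nhds ((union_subset_union hu₁ hv₂) (huv hx))
  have hsub : ⋂ n, M n ⊆ M n := iInter_subset _ n
  rcases (hconn n).subset_or_subset hO₁ hO₂ hO hn with h | h
  · refine Or.inl fun x hx => (huv hx).resolve_right fun hxv => ?_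
    exact hO.le_bot ⟨h (hsub hx), hv₂ hxv⟩
  · refine Or.inr fun x hx => (huv hx).resolve_left fun hxu => ?_
    exact hO.le_bot ⟨hu₁ hxu, h (hsub hx)⟩

end Separation

section Family

variable {X : Type*} [TopologicalSpace X]

/-- A family of separations, indexed by the separating points in `E`, which is linearly ordered:
`x` precedes `y` when `x ∈ U y`, equivalently `y ∈ V x`. -/
structure IsSeparationChain (E : Set X) (U V : X → Set X) : Prop where
  sep : ∀ x ∈ E, IsSeparationAt x (U x) (V x)
  mem_iff : ∀ x ∈ E, ∀ y ∈ E, x ∈ U y ↔ y ∈ V x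
  left_subset : ∀ x ∈ E, ∀ y ∈ E, x ∈ U y → U x ⊆ U y
  right_subset : ∀ x ∈ E, ∀ y ∈ E, x ∈ U y → V y ⊆ V x

namespace IsSeparationChain

variable {E P : Set X} {U V : X → Set X} {x y : X}

theorem symm (h : IsSeparationChain E U V) : IsSeparationChain E V U where
  sep x hx := (h.sep x hx).symm
  mem_iff x hx y hy := (h.mem_iff y hy x hx).symm
  left_subset x hx y hy hxy := h.right_subset y hy x hx ((h.mem_iff y hy x hx).2 hxy)
  right_subset x hx y hy hxy := h.left_subset y hy x hx ((h.mem_iff y hy x hx).2 hxy)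

theorem mono (h : IsSeparationChain E U V) (hP : P ⊆ E) : IsSeparationChain P U V where
  sep x hx := h.sep x (hP hx)
  mem_iff x hx y hy := h.mem_iff x (hP hx) y (hP hy)
  left_subset x hx y hy := h.left_subset x (hP hx) y (hP hy)
  right_subset x hx y hy := h.right_subset x (hP hx) y (hP hy)

theorem trichotomy (h : IsSeparationChain E U V) (hx : x ∈ E) (hy : y ∈ E) :
    x ∈ U y ∨ x = y ∨ y ∈ U x := by
  by_cases hxy : x = y
  · exact Or.inr (Or.inl hxy)
  · exact ((h.sep y hy).mem_or_mem hxy).imp_right fun hV => Or.inr ((h.mem_iff y hy x hx).2 hV)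

/-- An element whose right side meets the left side of `y` precedes `y`. -/
theorem mem_left_of_mem_right_of_mem_left (h : IsSeparationChain E U V) (hx : x ∈ E) (hy : y ∈ E)
    {z : X} (hzx : z ∈ V x) (hzy : z ∈ U y) : x ∈ U y := by
  rcases h.trichotomy hx hy with hxy | rfl | hyx
  · exact hxy
  · exact absurd hzx ((h.sep x hx).notMem_right_of_mem_left hzy)
  · exact absurd hzx ((h.sep x hx).notMem_right_of_mem_left (h.left_subset y hy x hx hyx hzy))

theorem nonempty_right_inter_left [ConnectedSpace X] (h : IsSeparationChain E U V)
    (hx : x ∈ E) (hy : y ∈ E) (hxy : x ∈ U y) : (V x ∩ U y).Nonempty := by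
  by_contra hne
  have heq : U y = (V x)ᶜ := by
    rw [(h.sep x hx).compl_right]
    refine Subset.antisymm (fun z hz => ?_) (insert_subset hxy (h.left_subset x hx y hy hxy))
    rw [← (h.sep x hx).compl_right]
    exact fun hzV => hne ⟨z, hzV, hz⟩
  have hclopen : IsClopen (U y) :=
    ⟨heq ▸ (h.sep x hx).isOpen_right.isClosed_compl, (h.sep y hy).isOpen_left⟩
  rcases isClopen_iff.1 hclopen with h0 | h1
  · exact (h0 ▸ hxy : x ∈ (∅ : Set X))
  · exact (h.sep y hy).notMem_left (h1 ▸ mem_univ y)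

theorem exists_mem_right_inter_left [ConnectedSpace X] (h : IsSeparationChain E U V)
    {z : ℕ → X} (hz : DenseRange z) (hx : x ∈ E) (hy : y ∈ E) (hxy : x ∈ U y) :
    ∃ n, z n ∈ V x ∧ z n ∈ U y :=
  hz.exists_mem_open ((h.sep x hx).isOpen_right.inter (h.sep y hy).isOpen_left)
    (h.nonempty_right_inter_left hx hy hxy)

/-- In a separable space, a chain whose terminal segments are countable is countable. -/
theorem countable_of_countable_right [ConnectedSpace X] (h : IsSeparationChain E U V)
    {z : ℕ → X} (hz : DenseRange z) (hE : ∀ x ∈ E, {y ∈ E | y ∈ V x}.Countable) :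
    E.Countable := by
  classical
  rcases E.eq_empty_or_nonempty with rfl | ⟨e, he⟩
  · exact countable_empty
  have hw : ∀ n, ∃ w ∈ E, (∃ x ∈ E, z n ∈ V x) → z n ∈ V w := by
    intro n
    by_cases hn : ∃ x ∈ E, z n ∈ V x
    · obtain ⟨x, hx, hxn⟩ := hn
      exact ⟨x, hx, fun _ => hxn⟩
    · exact ⟨e, he, fun h => absurd h hn⟩
  choose w hwE hw using hw
  have hcover : {x ∈ E | ∃ y ∈ E, y ∈ U x} ⊆ ⋃ n, {y ∈ E | y ∈ V (w n)} := by
    rintro x ⟨hx, y, hy, hyx⟩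
    obtain ⟨n, hnV, hnU⟩ := h.exists_mem_right_inter_left hz hy hx hyx
    refine mem_iUnion.2 ⟨n, hx, (h.mem_iff _ (hwE n) x hx).1 ?_⟩
    exact h.mem_left_of_mem_right_of_mem_left (hwE n) hx (hw n ⟨y, hy, hnV⟩) hnU
  have hmin : {x ∈ E | ¬ ∃ y ∈ E, y ∈ U x}.Subsingleton := by
    rintro x ⟨hx, hx'⟩ y ⟨hy, hy'⟩
    rcases h.trichotomy hx hy with hxy | rfl | hyx
    · exact absurd ⟨x, hx, hxy⟩ hy'
    · rfl
    · exact absurd ⟨y, hy, hyx⟩ hx'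
  refine (((countable_iUnion fun n => hE _ (hwE n)).mono hcover).union hmin.countable).mono ?_
  intro x hx
  by_cases hx' : ∃ y ∈ E, y ∈ U x
  · exact Or.inl ⟨hx, hx'⟩
  · exact Or.inr ⟨hx, hx'⟩

theorem countable_setOf_countable_right [ConnectedSpace X] (h : IsSeparationChain E U V)
    {z : ℕ → X} (hz : DenseRange z) (n : ℕ) :
    {x ∈ E | z n ∈ V x ∧ {y ∈ E | y ∈ V x ∧ z n ∈ V y}.Countable}.Countable := by
  refine (h.mono (sep_subset E _)).countable_of_countable_right hz ?_
  rintro x ⟨-, -, hx⟩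
  refine hx.mono ?_
  rintro y ⟨⟨hy, hyn, -⟩, hyx⟩
  exact ⟨hy, hyx, hyn⟩

/-- An uncountable chain contains an uncountable subchain that avoids a given dense sequence and
in which no member is adjacent to a term of that sequence. -/
theorem exists_subset_not_adjacent [ConnectedSpace X] (h : IsSeparationChain E U V)
    {z : ℕ → X} (hz : DenseRange z) (hE : ¬ E.Countable) :
    ∃ P ⊆ E, ¬ P.Countable ∧ (∀ x ∈ P, ∀ n, z n ≠ x) ∧
      (∀ x ∈ P, ∀ n, z n ∈ V x → ∃ y ∈ P, y ∈ V x ∧ z n ∈ V y) ∧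
      (∀ x ∈ P, ∀ n, z n ∈ U x → ∃ y ∈ P, y ∈ U x ∧ z n ∈ U y) := by
  set B : Set X := range z ∪
    ((⋃ n, {x ∈ E | z n ∈ V x ∧ {y ∈ E | y ∈ V x ∧ z n ∈ V y}.Countable}) ∪
      ⋃ n, {x ∈ E | z n ∈ U x ∧ {y ∈ E | y ∈ U x ∧ z n ∈ U y}.Countable})
  have hB : B.Countable :=
    (countable_range z).union ((countable_iUnion (h.countable_setOf_countable_right hz)).union
      (countable_iUnion (h.symm.countable_setOf_countable_right hz)))
  have huncountable : ∀ S : Set X, ¬ S.Countable → ¬ (S \ B).Countable := fun S hS hSB =>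
    hS ((hSB.union hB).mono fun x hx => by
      by_cases hxB : x ∈ B
      · exact Or.inr hxB
      · exact Or.inl ⟨hx, hxB⟩)
  have hinhabited : ∀ S : Set X, ¬ S.Countable → ∃ y ∈ S, y ∉ B := fun S hS =>
    (nonempty_iff_ne_empty.2 fun h0 => huncountable S hS (h0 ▸ countable_empty) :
      (S \ B).Nonempty)
  refine ⟨E \ B, sdiff_subset, huncountable E hE, ?_, ?_, ?_⟩
  · rintro x hx n rfl
    exact hx.2 (Or.inl ⟨n, rfl⟩)
  · rintro x ⟨hxE, hxB⟩ n hn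
    obtain ⟨y, ⟨hyE, hy⟩, hyB⟩ := hinhabited {y ∈ E | y ∈ V x ∧ z n ∈ V y} fun hc =>
      hxB (Or.inr (Or.inl (mem_iUnion.2 ⟨n, hxE, hn, hc⟩)))
    exact ⟨y, ⟨hyE, hyB⟩, hy⟩
  · rintro x ⟨hxE, hxB⟩ n hn
    obtain ⟨y, ⟨hyE, hy⟩, hyB⟩ := hinhabited {y ∈ E | y ∈ U x ∧ z n ∈ U y} fun hc =>
      hxB (Or.inr (Or.inr (mem_iUnion.2 ⟨n, hxE, hn, hc⟩)))
    exact ⟨y, ⟨hyE, hyB⟩, hy⟩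

/-- The part of the space between two members of a chain is a retract. -/
theorem isPeano_between [CompactSpace X] [ConnectedSpace X] [LocallyConnectedSpace X]
    (h : IsSeparationChain E U V) (hx : x ∈ E) (hy : y ∈ E) (hxy : x ∈ U y) :
    IsCompact ((U x ∪ V y)ᶜ) ∧ IsConnected ((U x ∪ V y)ᶜ) ∧
      LocallyConnectedSpace ((U x ∪ V y)ᶜ : Set X) := by
  classical
  have hyx : y ∉ U x :=
    (h.sep x hx).notMem_left_of_mem_right ((h.mem_iff x hx y hy).1 hxy)
  have hxy' : x ∉ V y := (h.sep y hy).notMem_right_of_mem_left hxy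
  refine isPeano_of_retract
    ((h.sep x hx).continuous_collapse.comp (h.sep y hy).symm.continuous_collapse)
    (fun w => ?_) fun w hw => ?_
  · by_cases hwV : w ∈ V y
    · simp [hwV, hyx, (h.sep y hy).notMem_right]
    · by_cases hwU : w ∈ U x
      · simp [hwV, hwU, hxy', (h.sep x hx).notMem_left]
      · simp [hwV, hwU]
  · have hwV : w ∉ V y := fun hw' => hw (Or.inr hw')
    have hwU : w ∉ U x := fun hw' => hw (Or.inl hw')
    simp [hwV, hwU]

end IsSeparationChain

/-- Separations of two fixed points form a chain. -/
theorem isSeparationChain_of_separates [CompactSpace X] [ConnectedSpace X]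
    [LocallyConnectedSpace X] {E : Set X} {U V : X → Set X} {p q : X}
    (hsep : ∀ x ∈ E, IsSeparationAt x (U x) (V x)) (hp : ∀ x ∈ E, p ∈ U x)
    (hq : ∀ x ∈ E, q ∈ V x) : IsSeparationChain E U V := by
  have left : ∀ x ∈ E, ∀ y ∈ E, y ∈ V x → insert x (U x) ⊆ U y := by
    intro x hx y hy hyx
    rw [← (hsep x hx).compl_right]
    have hsub : (V x)ᶜ ⊆ U y ∪ V y := by
      rw [(hsep y hy).union_eq, compl_subset_compl]
      simpa using hyx
    exact ((hsep x hx).symm.isPeano_compl_left.2.1.isPreconnected.subset_left_of_subset_union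
      (hsep y hy).isOpen_left (hsep y hy).isOpen_right (hsep y hy).disjoint hsub
      ⟨p, (hsep x hx).notMem_right_of_mem_left (hp x hx), hp y hy⟩)
  have right : ∀ x ∈ E, ∀ y ∈ E, y ∈ U x → insert x (V x) ⊆ V y := by
    intro x hx y hy hyx
    rw [← (hsep x hx).symm.compl_right]
    have hsub : (U x)ᶜ ⊆ U y ∪ V y := by
      rw [(hsep y hy).union_eq, compl_subset_compl]
      simpa using hyx
    exact ((hsep x hx).isPeano_compl_left.2.1.isPreconnected.subset_right_of_subset_union
      (hsep y hy).isOpen_left (hsep y hy).isOpen_right (hsep y hy).disjoint hsub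
      ⟨q, (hsep x hx).notMem_left_of_mem_right (hq x hx), hq y hy⟩)
  have mem_iff : ∀ x ∈ E, ∀ y ∈ E, x ∈ U y ↔ y ∈ V x := fun x hx y hy =>
    ⟨fun hxy => right y hy x hx hxy (mem_insert _ _),
      fun hyx => left x hx y hy hyx (mem_insert _ _)⟩
  exact ⟨hsep, mem_iff,
    fun x hx y hy hxy => (subset_insert _ _).trans (left x hx y hy ((mem_iff x hx y hy).1 hxy)),
    fun x hx y hy hxy => (subset_insert _ _).trans (right y hy x hx hxy)⟩

theorem IsCutPoint.exists_isSeparationAt [T1Space X] {x : X} (hx : IsCutPoint x) :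
    ∃ U V, IsSeparationAt x U V ∧ U.Nonempty ∧ V.Nonempty := by
  have hopen : IsOpen ({x}ᶜ : Set X) := isOpen_compl_singleton
  unfold IsCutPoint IsPreconnected at hx
  push Not at hx
  obtain ⟨u, v, hu, hv, huv, hune, hvne, hempty⟩ := hx
  refine ⟨{x}ᶜ ∩ u, {x}ᶜ ∩ v, ⟨hopen.inter hu, hopen.inter hv, ?_, ?_⟩, hune, hvne⟩
  · rw [disjoint_iff_inter_eq_empty, ← hempty]
    ext y
    simp only [mem_inter_iff]
    tauto
  · rw [← inter_union_distrib_left]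
    exact inter_eq_left.2 huv

/-- Uncountably many cut points give an uncountable chain of separations. -/
theorem exists_isSeparationChain [T1Space X] [CompactSpace X] [ConnectedSpace X]
    [LocallyConnectedSpace X] {z : ℕ → X} (hz : DenseRange z)
    (hcut : ¬ {x : X | IsCutPoint x}.Countable) :
    ∃ (E : Set X) (U V : X → Set X), IsSeparationChain E U V ∧ ¬ E.Countable ∧
      (∀ x ∈ E, (U x).Nonempty) ∧ ∀ x ∈ E, (V x).Nonempty := by
  classical
  have hsep : ∀ x : X, ∃ U V, IsCutPoint x →
      IsSeparationAt x U V ∧ U.Nonempty ∧ V.Nonempty := by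
    intro x
    by_cases hx : IsCutPoint x
    · obtain ⟨U, V, h⟩ := hx.exists_isSeparationAt
      exact ⟨U, V, fun _ => h⟩
    · exact ⟨∅, ∅, fun h => absurd h hx⟩
  choose U V hUV using hsep
  obtain ⟨m, n, hmn⟩ : ∃ m n, ¬ {x | IsCutPoint x ∧ z m ∈ U x ∧ z n ∈ V x}.Countable := by
    by_contra! hcount
    refine hcut ((countable_iUnion fun m => countable_iUnion fun n => hcount m n).mono ?_)
    intro x hx
    obtain ⟨hs, hU, hV⟩ := hUV x hx
    obtain ⟨m, hm⟩ := hz.exists_mem_open hs.isOpen_left hU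
    obtain ⟨n, hn⟩ := hz.exists_mem_open hs.isOpen_right hV
    exact mem_iUnion.2 ⟨m, mem_iUnion.2 ⟨n, hx, hm, hn⟩⟩
  exact ⟨_, U, V, isSeparationChain_of_separates (fun x hx => (hUV x hx.1).1)
    (fun x hx => hx.2.1) (fun x hx => hx.2.2), hmn, fun x hx => ⟨_, hx.2.1⟩,
    fun x hx => ⟨_, hx.2.2⟩⟩

end Family

section Scheme

variable {X : Type*} [TopologicalSpace X]

/-- A binary tree of intervals of a chain of separations. The word `σ`, read from its last letter,
labels the interval from `a σ` to `b σ`, from which the gap between `l σ` and `r σ` is removed. -/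
structure IsGapScheme (P : Set X) (U V : X → Set X) (a b l r : List Bool → X) : Prop where
  chain : IsSeparationChain P U V
  a_mem : ∀ σ, a σ ∈ P
  b_mem : ∀ σ, b σ ∈ P
  l_mem : ∀ σ, l σ ∈ P
  r_mem : ∀ σ, r σ ∈ P
  a_lt_l : ∀ σ, a σ ∈ U (l σ)
  l_lt_r : ∀ σ, l σ ∈ U (r σ)
  r_lt_b : ∀ σ, r σ ∈ U (b σ)
  a_false : ∀ σ, a (false :: σ) = a σ
  b_false : ∀ σ, b (false :: σ) = l σ
  a_true : ∀ σ, a (true :: σ) = r σ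
  b_true : ∀ σ, b (true :: σ) = b σ

/-- Every interval of a non-adjacent chain has a gap whose removal discards the `n`-th term
of the dense sequence. -/
theorem IsSeparationChain.exists_gap [ConnectedSpace X] {P : Set X} {U V : X → Set X}
    (h : IsSeparationChain P U V) {z : ℕ → X} (hz : DenseRange z) (hne : ∀ x ∈ P, ∀ n, z n ≠ x)
    (hV : ∀ x ∈ P, ∀ n, z n ∈ V x → ∃ y ∈ P, y ∈ V x ∧ z n ∈ V y)
    (hU : ∀ x ∈ P, ∀ n, z n ∈ U x → ∃ y ∈ P, y ∈ U x ∧ z n ∈ U y)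
    (n : ℕ) {a b : X} (ha : a ∈ P) (hb : b ∈ P) (hab : a ∈ U b) :
    ∃ l ∈ P, ∃ r ∈ P, a ∈ U l ∧ l ∈ U r ∧ r ∈ U b ∧ z n ∉ (U a ∪ V l)ᶜ ∧ z n ∉ (U r ∪ V b)ᶜ := by
  obtain ⟨m, hma, hmb, hm⟩ : ∃ m, z m ∈ V a ∧ z m ∈ U b ∧ (z n ∈ V a → z n ∈ U b → m = n) := by
    by_cases hn : z n ∈ V a ∧ z n ∈ U b
    · exact ⟨n, hn.1, hn.2, fun _ _ => rfl⟩
    · obtain ⟨m, hma, hmb⟩ := h.exists_mem_right_inter_left hz ha hb hab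
      exact ⟨m, hma, hmb, fun h1 h2 => absurd ⟨h1, h2⟩ hn⟩
  obtain ⟨l, hl, hla, hml⟩ := hV a ha m hma
  obtain ⟨r, hr, hrb, hmr⟩ := hU b hb m hmb
  have hal : a ∈ U l := (h.mem_iff a ha l hl).2 hla
  have hlr : l ∈ U r := h.mem_left_of_mem_right_of_mem_left hl hr hml hmr
  refine ⟨l, hl, r, hr, hal, hlr, hrb, ?_, ?_⟩
  all_goals
    rw [notMem_compl_iff]
    rcases (h.sep a ha).mem_or_mem (hne a ha n) with hna | hna
    · first
        | exact Or.inl hna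
        | exact Or.inl (h.left_subset l hl r hr hlr (h.left_subset a ha l hl hal hna))
    rcases (h.sep b hb).mem_or_mem (hne b hb n) with hnb | hnb
    · obtain rfl := hm hna hnb
      first
        | exact Or.inr hml
        | exact Or.inl hmr
    · first
        | exact Or.inr hnb
        | exact Or.inr (h.right_subset l hl r hr hlr (h.right_subset r hr b hb hrb hnb))

theorem IsSeparationChain.exists_isGapScheme [ConnectedSpace X] {P : Set X} {U V : X → Set X}
    (h : IsSeparationChain P U V) {z : ℕ → X} (hz : DenseRange z) (hP : ¬ P.Countable)
    (hne : ∀ x ∈ P, ∀ n, z n ≠ x)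
    (hV : ∀ x ∈ P, ∀ n, z n ∈ V x → ∃ y ∈ P, y ∈ V x ∧ z n ∈ V y)
    (hU : ∀ x ∈ P, ∀ n, z n ∈ U x → ∃ y ∈ P, y ∈ U x ∧ z n ∈ U y) :
    ∃ a b l r : List Bool → X, IsGapScheme P U V a b l r ∧
      ∀ i σ, z σ.length ∉ (U (a (i :: σ)) ∪ V (b (i :: σ)))ᶜ := by
  let Node := {c : X × X // c.1 ∈ P ∧ c.2 ∈ P ∧ c.1 ∈ U c.2}
  obtain ⟨c₀⟩ : Nonempty Node := by
    obtain ⟨x, hx, y, hy, hxy⟩ : P.Nontrivial :=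
      not_subsingleton_iff.1 fun hs => hP hs.countable
    rcases h.trichotomy hx hy with hlt | heq | hlt
    · exact ⟨⟨(x, y), hx, hy, hlt⟩⟩
    · exact absurd heq hxy
    · exact ⟨⟨(y, x), hy, hx, hlt⟩⟩
  have hgap := fun (n : ℕ) (c : Node) => h.exists_gap hz hne hV hU n c.2.1 c.2.2.1 c.2.2.2
  choose l hl r hr hal hlr hrb hzl hzr using hgap
  let child : Bool → ℕ → Node → Node := fun i n c =>
    if i then ⟨(r n c, c.1.2), hr n c, c.2.2.1, hrb n c⟩
    else ⟨(c.1.1, l n c), c.2.1, hl n c, hal n c⟩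
  let node : List Bool → Node := fun σ =>
    List.rec c₀ (fun i τ c => child i τ.length c) σ
  refine ⟨fun σ => (node σ).1.1, fun σ => (node σ).1.2, fun σ => l σ.length (node σ),
    fun σ => r σ.length (node σ), ⟨h, fun σ => (node σ).2.1, fun σ => (node σ).2.2.1,
      fun σ => hl _ _, fun σ => hr _ _, fun σ => hal _ _, fun σ => hlr _ _, fun σ => hrb _ _,
      fun σ => rfl, fun σ => rfl, fun σ => rfl, fun σ => rfl⟩, ?_⟩
  rintro (_ | _) σ
  · exact hzl _ (node σ)
  · exact hzr _ (node σ)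

namespace IsGapScheme

open PiNat

variable {P : Set X} {U V : X → Set X} {a b l r : List Bool → X}

/-- The closed interval labelled by `σ`. -/
local notation "cell" => fun σ => (U (a σ) ∪ V (b σ))ᶜ

/-- The gap labelled by `σ`. -/
local notation "gap" => fun σ => (U (l σ) ∪ V (r σ))ᶜ

theorem a_lt_b (h : IsGapScheme P U V a b l r) (σ : List Bool) : a σ ∈ U (b σ) :=
  h.chain.left_subset _ (h.r_mem σ) _ (h.b_mem σ) (h.r_lt_b σ)
    (h.chain.left_subset _ (h.l_mem σ) _ (h.r_mem σ) (h.l_lt_r σ) (h.a_lt_l σ))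

theorem left_a_subset_left_l (h : IsGapScheme P U V a b l r) (σ : List Bool) :
    U (a σ) ⊆ U (l σ) :=
  h.chain.left_subset _ (h.a_mem σ) _ (h.l_mem σ) (h.a_lt_l σ)

theorem left_l_subset_left_r (h : IsGapScheme P U V a b l r) (σ : List Bool) :
    U (l σ) ⊆ U (r σ) :=
  h.chain.left_subset _ (h.l_mem σ) _ (h.r_mem σ) (h.l_lt_r σ)

theorem right_r_subset_right_l (h : IsGapScheme P U V a b l r) (σ : List Bool) :
    V (r σ) ⊆ V (l σ) :=
  h.chain.right_subset _ (h.l_mem σ) _ (h.r_mem σ) (h.l_lt_r σ)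

theorem right_b_subset_right_r (h : IsGapScheme P U V a b l r) (σ : List Bool) :
    V (b σ) ⊆ V (r σ) :=
  h.chain.right_subset _ (h.r_mem σ) _ (h.b_mem σ) (h.r_lt_b σ)

theorem cell_cons_subset (h : IsGapScheme P U V a b l r) (i : Bool) (σ : List Bool) :
    cell (i :: σ) ⊆ cell σ := by
  refine compl_subset_compl.2 ?_
  cases i
  · rw [h.a_false, h.b_false]
    exact union_subset_union_right _
      ((h.right_b_subset_right_r σ).trans (h.right_r_subset_right_l σ))
  · rw [h.a_true, h.b_true]
    exact union_subset_union_left _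
      ((h.left_a_subset_left_l σ).trans (h.left_l_subset_left_r σ))

theorem gap_subset (h : IsGapScheme P U V a b l r) (σ : List Bool) :
    gap σ ⊆ V (a σ) ∩ U (b σ) := by
  intro y hy
  have hyl : y ∉ U (l σ) := fun hy' => hy (Or.inl hy')
  have hyr : y ∉ V (r σ) := fun hy' => hy (Or.inr hy')
  constructor
  · refine ((h.chain.sep _ (h.a_mem σ)).mem_or_mem ?_).resolve_left
      fun hya => hyl (h.left_a_subset_left_l σ hya)
    rintro rfl
    exact hyl (h.a_lt_l σ)
  · refine ((h.chain.sep _ (h.b_mem σ)).mem_or_mem ?_).resolve_right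
      fun hyb => hyr (h.right_b_subset_right_r σ hyb)
    rintro rfl
    exact hyr ((h.chain.mem_iff _ (h.r_mem σ) _ (h.b_mem σ)).1 (h.r_lt_b σ))

theorem open_subset_cell (h : IsGapScheme P U V a b l r) (σ : List Bool) :
    V (a σ) ∩ U (b σ) ⊆ cell σ := by
  rintro y ⟨hya, hyb⟩ (hy | hy)
  · exact (h.chain.sep _ (h.a_mem σ)).notMem_left_of_mem_right hya hy
  · exact (h.chain.sep _ (h.b_mem σ)).notMem_right_of_mem_left hyb hy

theorem open_cons_subset (h : IsGapScheme P U V a b l r) (i : Bool) (σ : List Bool) :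
    V (a (i :: σ)) ∩ U (b (i :: σ)) ⊆ V (a σ) ∩ U (b σ) := by
  cases i
  · rw [h.a_false, h.b_false]
    exact inter_subset_inter_right _ ((h.left_l_subset_left_r σ).trans
      (h.chain.left_subset _ (h.r_mem σ) _ (h.b_mem σ) (h.r_lt_b σ)))
  · rw [h.a_true, h.b_true]
    exact inter_subset_inter_left _ ((h.right_r_subset_right_l σ).trans
      (h.chain.right_subset _ (h.a_mem σ) _ (h.l_mem σ) (h.a_lt_l σ)))

theorem open_subset_open_nil (h : IsGapScheme P U V a b l r) (σ : List Bool) :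
    V (a σ) ∩ U (b σ) ⊆ V (a []) ∩ U (b []) := by
  induction σ with
  | nil => exact subset_rfl
  | cons i σ ih => exact (h.open_cons_subset i σ).trans ih

theorem open_cons_disjoint_gap (h : IsGapScheme P U V a b l r) (i : Bool) (σ : List Bool) :
    Disjoint (V (a (i :: σ)) ∩ U (b (i :: σ))) (gap σ) := by
  refine disjoint_compl_right_iff_subset.2 ?_
  cases i
  · rw [h.b_false]
    exact fun y hy => Or.inl hy.2
  · rw [h.a_true]
    exact fun y hy => Or.inr hy.1

theorem cell_disjoint (h : IsGapScheme P U V a b l r) :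
    ∀ σ τ : List Bool, σ.length = τ.length → σ ≠ τ → Disjoint (cell σ) (cell τ)
  | [], [], _, hne => absurd rfl hne
  | i :: σ, j :: τ, hlen, hne => by
    by_cases hστ : σ = τ
    · subst hστ
      have key : Disjoint (cell (false :: σ)) (cell (true :: σ)) := by
        simp only [h.a_false, h.b_false, h.a_true, h.b_true]
        refine disjoint_left.2 fun y hy hy' => ?_
        have hyl : y ∉ V (l σ) := fun hy₁ => hy (Or.inr hy₁)
        have hyr : y ∉ U (r σ) := fun hy₁ => hy' (Or.inl hy₁)
        have heq := (h.chain.sep _ (h.l_mem σ)).eq_of_notMem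
          (fun hy₁ => hyr (h.left_l_subset_left_r σ hy₁)) hyl
        exact hyr (heq ▸ h.l_lt_r σ)
      cases i <;> cases j
      · exact absurd rfl hne
      · exact key
      · exact key.symm
      · exact absurd rfl hne
    · exact (h.cell_disjoint σ τ (by simpa using hlen) hστ).mono
        (h.cell_cons_subset i σ) (h.cell_cons_subset j τ)

theorem gap_disjoint_open (h : IsGapScheme P U V a b l r) (σ τ : List Bool)
    (hlen : σ.length < τ.length) : Disjoint (gap σ) (V (a τ) ∩ U (b τ)) := by
  induction τ with
  | nil => simp at hlen
  | cons j τ ih =>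
    rcases (Nat.lt_succ_iff.1 hlen).lt_or_eq with hlt | heq
    · exact (ih hlt).mono_right (h.open_cons_subset j τ)
    · by_cases hστ : σ = τ
      · subst hστ
        exact (h.open_cons_disjoint_gap j σ).symm
      · exact (h.cell_disjoint σ τ heq hστ).mono
          ((h.gap_subset σ).trans (h.open_subset_cell σ))
          ((h.open_cons_subset j τ).trans (h.open_subset_cell τ))

theorem gap_disjoint (h : IsGapScheme P U V a b l r) {σ τ : List Bool} (hne : σ ≠ τ) :
    Disjoint (gap σ) (gap τ) := by
  rcases lt_trichotomy σ.length τ.length with hlt | heq | hlt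
  · exact (h.gap_disjoint_open σ τ hlt).mono_right (h.gap_subset τ)
  · exact (h.cell_disjoint σ τ heq hne).mono
      ((h.gap_subset σ).trans (h.open_subset_cell σ))
      ((h.gap_subset τ).trans (h.open_subset_cell τ))
  · exact ((h.gap_disjoint_open τ σ hlt).mono_right (h.gap_subset σ)).symm

theorem antitone_cell_res (h : IsGapScheme P U V a b l r) (f : ℕ → Bool) :
    Antitone fun n => cell (res f n) :=
  antitone_nat_of_succ_le fun n => h.cell_cons_subset (f n) (res f n)

theorem isClosed_cell (h : IsGapScheme P U V a b l r) (σ : List Bool) : IsClosed (cell σ) :=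
  ((h.chain.sep _ (h.a_mem σ)).isOpen_left.union
    (h.chain.sep _ (h.b_mem σ)).isOpen_right).isClosed_compl

theorem a_mem_cell (h : IsGapScheme P U V a b l r) (σ : List Bool) : a σ ∈ cell σ := by
  rintro (ha | ha)
  · exact (h.chain.sep _ (h.a_mem σ)).notMem_left ha
  · exact (h.chain.sep _ (h.b_mem σ)).notMem_right_of_mem_left (h.a_lt_b σ) ha

theorem b_mem_cell (h : IsGapScheme P U V a b l r) (σ : List Bool) : b σ ∈ cell σ := by
  rintro (hb | hb)
  · exact (h.chain.sep _ (h.a_mem σ)).notMem_left_of_mem_right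
      ((h.chain.mem_iff _ (h.a_mem σ) _ (h.b_mem σ)).1 (h.a_lt_b σ)) hb
  · exact (h.chain.sep _ (h.b_mem σ)).notMem_right hb

/-- If every term of a dense sequence is eventually discarded, each branch of the scheme has
exactly one point. -/
theorem exists_iInter_cell_eq_singleton [T2Space X] [CompactSpace X] [ConnectedSpace X]
    [LocallyConnectedSpace X] (h : IsGapScheme P U V a b l r) {z : ℕ → X} (hz : DenseRange z)
    (hzc : ∀ i σ, z σ.length ∉ cell (i :: σ)) (f : ℕ → Bool) :
    ∃ x, ⋂ n, cell (res f n) = {x} := by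
  have hanti := h.antitone_cell_res f
  have hne : (⋂ n, cell (res f n)).Nonempty :=
    IsCompact.nonempty_iInter_of_sequence_nonempty_isCompact_isClosed _
      (fun n => hanti n.le_succ) (fun n => ⟨_, h.a_mem_cell _⟩) (h.isClosed_cell _).isCompact
      fun n => h.isClosed_cell _
  have hconn : IsPreconnected (⋂ n, cell (res f n)) :=
    isPreconnected_iInter_of_antitone hanti (fun n => h.isClosed_cell _) fun n =>
      (h.chain.isPeano_between (h.a_mem _) (h.b_mem _) (h.a_lt_b _)).2.1.isPreconnected
  obtain ⟨c, hc⟩ : ∃ c, Tendsto (fun n => a (res f n)) (hyperfilter ℕ) (𝓝 c) :=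
    ⟨_, ((hyperfilter ℕ).map fun n => a (res f n)).le_nhds_lim⟩
  obtain ⟨d, hd⟩ : ∃ d, Tendsto (fun n => b (res f n)) (hyperfilter ℕ) (𝓝 d) :=
    ⟨_, ((hyperfilter ℕ).map fun n => b (res f n)).le_nhds_lim⟩
  have hsub : ⋂ n, cell (res f n) ⊆ {c, d} := by
    intro y hy
    by_contra hycd
    simp only [mem_insert_iff, mem_singleton_iff, not_or] at hycd
    obtain ⟨u, u', hu, hu', hyu, hcu', huu'⟩ := t2_separation hycd.1
    obtain ⟨v, v', hv, hv', hyv, hdv', hvv'⟩ := t2_separation hycd.2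
    set W := connectedComponentIn (u ∩ v) y
    have hyW : y ∈ W := mem_connectedComponentIn ⟨hyu, hyv⟩
    have hWuv : W ⊆ u ∩ v := connectedComponentIn_subset _ _
    have hWconn : IsPreconnected W := isPreconnected_connectedComponentIn
    have hWcell : ∀ᶠ n in (hyperfilter ℕ : Filter ℕ), W ⊆ cell (res f n) := by
      filter_upwards [hc (hu'.mem_nhds hcu'), hd (hv'.mem_nhds hdv')] with n han hbn
      have ha : a (res f n) ∉ W := fun haW => huu'.le_bot ⟨(hWuv haW).1, han⟩
      have hb : b (res f n) ∉ W := fun hbW => hvv'.le_bot ⟨(hWuv hbW).2, hbn⟩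
      have hyn : y ∈ cell (res f n) := mem_iInter.1 hy n
      have hsa := h.chain.sep _ (h.a_mem (res f n))
      have hsb := h.chain.sep _ (h.b_mem (res f n))
      have hWa : W ⊆ V (a (res f n)) := by
        refine hWconn.subset_right_of_subset_union hsa.isOpen_left hsa.isOpen_right hsa.disjoint
          ?_ ⟨y, hyW, ?_⟩
        · rw [hsa.union_eq]
          exact subset_compl_singleton_iff.2 ha
        · exact (hsa.mem_or_mem fun heq => ha (heq ▸ hyW)).resolve_left
            fun hyU => hyn (Or.inl hyU)
      have hWb : W ⊆ U (b (res f n)) := by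
        refine hWconn.subset_left_of_subset_union hsb.isOpen_left hsb.isOpen_right hsb.disjoint
          ?_ ⟨y, hyW, ?_⟩
        · rw [hsb.union_eq]
          exact subset_compl_singleton_iff.2 hb
        · exact (hsb.mem_or_mem fun heq => hb (heq ▸ hyW)).resolve_right
            fun hyV => hyn (Or.inr hyV)
      exact (subset_inter hWa hWb).trans (h.open_subset_cell _)
    obtain ⟨k, hk⟩ := hz.exists_mem_open ((hu.inter hv).connectedComponentIn) ⟨y, hyW⟩
    obtain ⟨n, hWn, hkn⟩ := (hWcell.and
      (Nat.hyperfilter_le_atTop (eventually_ge_atTop (k + 1)))).exists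
    have hzk : z k ∈ cell (f k :: res f k) := hanti hkn (hWn hk)
    have := hzc (f k) (res f k)
    rw [res_length] at this
    exact this hzk
  have hss : (⋂ n, cell (res f n)).Subsingleton := by
    by_contra hnt
    exact hconn.infinite_of_nontrivial (not_subsingleton_iff.1 hnt)
      ((toFinite {c, d}).subset hsub)
  obtain ⟨x, hx⟩ := hne
  exact ⟨x, hss.eq_singleton_of_mem hx⟩

/-- If each branch of the scheme has exactly one point, the branch map is a continuous
injection. -/
theorem exists_branch_map [T2Space X] [CompactSpace X] (h : IsGapScheme P U V a b l r)
    (hbranch : ∀ f, ∃ x, ⋂ n, cell (res f n) = {x}) :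
    ∃ g : (ℕ → Bool) → X, Continuous g ∧ Function.Injective g ∧
      ∀ f x, (∀ n, x ∈ cell (res f n)) ↔ x = g f := by
  choose g hg using hbranch
  have hmem : ∀ f x, (∀ n, x ∈ cell (res f n)) ↔ x = g f := fun f x => by
    rw [← mem_iInter, hg, mem_singleton_iff]
  refine ⟨g, ?_, fun f₁ f₂ heq => ?_, hmem⟩
  · refine continuous_iff_continuousAt.2 fun f O hO => ?_
    obtain ⟨n, hn⟩ := exists_subset_nhds_of_isCompact (h.antitone_cell_res f).directed_ge
      (fun n => (h.isClosed_cell _).isCompact) (U := O) (by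
        intro x hx
        rw [hg f, mem_singleton_iff] at hx
        exact hx ▸ hO)
    have hcyl : cylinder f n ∈ 𝓝 f := (isOpen_cylinder _ f n).mem_nhds (self_mem_cylinder f n)
    refine mem_map.2 (mem_of_superset hcyl fun f' hf' => ?_)
    have hres : res f' n = res f n := by
      rwa [cylinder_eq_res] at hf'
    exact hn (hres ▸ (hmem f' _).2 rfl n)
  · refine res_injective (funext fun n => ?_)
    by_contra hne
    exact (h.cell_disjoint _ _ (by simp) hne).le_bot
      ⟨(hmem f₁ _).2 rfl n, heq ▸ (hmem f₂ _).2 rfl n⟩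

end IsGapScheme

end Scheme

section Address

open PiNat

theorem res_catSeq_length (s : List Bool) (t : ℕ → Bool) :
    res (catSeq s t) s.length = s.reverse := by
  refine List.ext_getElem (by simp) fun n h₁ h₂ => ?_
  have key : ∀ (f : ℕ → Bool) (m n : ℕ) (hn : n < (res f m).length),
      (res f m)[n] = f (m - 1 - n) := by
    intro f m
    induction m with
    | zero => intro n hn; simp at hn
    | succ m ih =>
      intro n hn
      cases n with
      | zero => simp
      | succ n =>
        simp only [res_succ, List.getElem_cons_succ]
        rw [ih]
        congr 1
        omega
  rw [key, List.getElem_reverse, catSeq]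
  simp only [List.length_reverse] at h₂
  rw [dif_pos (by omega)]
  simp

theorem catSeq_of_length_le (s : List Bool) (t : ℕ → Bool) {n : ℕ} (hn : s.length ≤ n) :
    catSeq s t n = t (n - s.length) :=
  dif_neg hn.not_gt

end Address

namespace IsGapScheme

open PiNat

variable {X : Type*} [TopologicalSpace X] {P : Set X} {U V : X → Set X} {a b l r : List Bool → X}

theorem a_res_eq (h : IsGapScheme P U V a b l r) {f : ℕ → Bool} {m : ℕ}
    (hf : ∀ n, m ≤ n → f n = false) {n : ℕ} (hn : m ≤ n) : a (res f n) = a (res f m) := by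
  induction n, hn using Nat.le_induction with
  | base => rfl
  | succ n hn ih => rw [res_succ, hf n hn, h.a_false, ih]

theorem b_res_eq (h : IsGapScheme P U V a b l r) {f : ℕ → Bool} {m : ℕ}
    (hf : ∀ n, m ≤ n → f n = true) {n : ℕ} (hn : m ≤ n) : b (res f n) = b (res f m) := by
  induction n, hn using Nat.le_induction with
  | base => rfl
  | succ n hn ih => rw [res_succ, hf n hn, h.b_true, ih]

theorem a_mem_cell_res (h : IsGapScheme P U V a b l r) {f : ℕ → Bool} {m : ℕ}
    (hf : ∀ n, m ≤ n → f n = false) (n : ℕ) :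
    a (res f m) ∈ (U (a (res f n)) ∪ V (b (res f n)))ᶜ := by
  have hmax := h.a_mem_cell (res f (max m n))
  rw [h.a_res_eq hf (le_max_left m n)] at hmax
  exact h.antitone_cell_res f (le_max_right m n) hmax

theorem b_mem_cell_res (h : IsGapScheme P U V a b l r) {f : ℕ → Bool} {m : ℕ}
    (hf : ∀ n, m ≤ n → f n = true) (n : ℕ) :
    b (res f m) ∈ (U (a (res f n)) ∪ V (b (res f n)))ᶜ := by
  have hmax := h.b_mem_cell (res f (max m n))
  rw [h.b_res_eq hf (le_max_left m n)] at hmax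
  exact h.antitone_cell_res f (le_max_right m n) hmax

theorem r_mem_cell_res (h : IsGapScheme P U V a b l r) (s : List Bool) (n : ℕ) :
    r s.reverse ∈ (U (a (res (catSeq (s ++ [true]) fun _ => false) n)) ∪
      V (b (res (catSeq (s ++ [true]) fun _ => false) n)))ᶜ := by
  have := h.a_mem_cell_res (f := catSeq (s ++ [true]) fun _ => false)
    (fun n hn => catSeq_of_length_le _ _ hn) n
  rwa [res_catSeq_length, List.reverse_append, List.reverse_singleton, List.singleton_append,
    h.a_true] at this

theorem l_mem_cell_res (h : IsGapScheme P U V a b l r) (s : List Bool) (n : ℕ) :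
    l s.reverse ∈ (U (a (res (catSeq (s ++ [false]) fun _ => true) n)) ∪
      V (b (res (catSeq (s ++ [false]) fun _ => true) n)))ᶜ := by
  have := h.b_mem_cell_res (f := catSeq (s ++ [false]) fun _ => true)
    (fun n hn => catSeq_of_length_le _ _ hn) n
  rwa [res_catSeq_length, List.reverse_append, List.reverse_singleton, List.singleton_append,
    h.b_false] at this

/-- A point of a gap lying on some branch is an endpoint of the gap. -/
theorem eq_of_mem_gap_of_mem_cell_res (h : IsGapScheme P U V a b l r) {f : ℕ → Bool}
    {σ : List Bool} {y : X} (hy : y ∈ (U (l σ) ∪ V (r σ))ᶜ)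
    (hf : ∀ n, y ∈ (U (a (res f n)) ∪ V (b (res f n)))ᶜ) : y = l σ ∨ y = r σ := by
  have hσ : res f σ.length = σ := by
    by_contra hne
    exact (h.cell_disjoint _ _ (by simp) hne).le_bot
      ⟨hf σ.length, h.open_subset_cell σ (h.gap_subset σ hy)⟩
  have hnext := hf (σ.length + 1)
  rw [res_succ, hσ] at hnext
  cases hi : f σ.length
  · rw [hi, h.a_false, h.b_false] at hnext
    exact Or.inl ((h.chain.sep _ (h.l_mem σ)).eq_of_notMem (fun hU => hy (Or.inl hU))
      fun hV => hnext (Or.inr hV))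
  · rw [hi, h.a_true, h.b_true] at hnext
    exact Or.inr ((h.chain.sep _ (h.r_mem σ)).eq_of_notMem (fun hU => hnext (Or.inl hU))
      fun hV => hy (Or.inr hV))

theorem l_mem_gap (h : IsGapScheme P U V a b l r) (σ : List Bool) :
    l σ ∈ (U (l σ) ∪ V (r σ))ᶜ := by
  rintro (hl | hl)
  · exact (h.chain.sep _ (h.l_mem σ)).notMem_left hl
  · exact (h.chain.sep _ (h.r_mem σ)).notMem_right_of_mem_left (h.l_lt_r σ) hl

theorem r_mem_gap (h : IsGapScheme P U V a b l r) (σ : List Bool) :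
    r σ ∈ (U (l σ) ∪ V (r σ))ᶜ := by
  rintro (hr | hr)
  · exact (h.chain.sep _ (h.l_mem σ)).notMem_left_of_mem_right
      ((h.chain.mem_iff _ (h.l_mem σ) _ (h.r_mem σ)).1 (h.l_lt_r σ)) hr
  · exact (h.chain.sep _ (h.r_mem σ)).notMem_right hr

/-- A point between `a []` and `b []` that avoids all gaps lies on a branch. -/
theorem exists_branch_of_notMem_gap (h : IsGapScheme P U V a b l r) {y : X}
    (hy : y ∈ V (a []) ∩ U (b [])) (hgap : ∀ σ, y ∉ (U (l σ) ∪ V (r σ))ᶜ) :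
    ∃ f : ℕ → Bool, ∀ n, y ∈ (U (a (res f n)) ∪ V (b (res f n)))ᶜ := by
  have hstep : ∀ σ, ∃ i, y ∈ V (a σ) ∩ U (b σ) → y ∈ V (a (i :: σ)) ∩ U (b (i :: σ)) := by
    intro σ
    rcases not_not.1 (hgap σ) with hl | hr
    · exact ⟨false, fun hσ => by rw [h.a_false, h.b_false]; exact ⟨hσ.1, hl⟩⟩
    · exact ⟨true, fun hσ => by rw [h.a_true, h.b_true]; exact ⟨hr, hσ.2⟩⟩
  choose i hi using hstep
  let g : ℕ → List Bool := fun n => Nat.rec [] (fun _ σ => i σ :: σ) n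
  have hg : ∀ n, res (fun n => i (g n)) n = g n := by
    intro n
    induction n with
    | zero => rfl
    | succ n ih => rw [res_succ, ih]
  refine ⟨fun n => i (g n), fun n => h.open_subset_cell _ ?_⟩
  rw [hg]
  induction n with
  | zero => exact hy
  | succ n ih => exact hi _ ih

end IsGapScheme

/-- Structure proposition: a Peano continuum with uncountably many cut points decomposes
as `L ∪ R ∪ C ∪ ⋃_s X_s` where `C` is a Cantor set, `L, R, X_s` are pairwise disjoint
nondegenerate Peano subcontinua meeting `C` in the prescribed points. -/
theorem structure_of_peano_continuum_with_uncountably_many_cut_points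
    {X : Type*} [MetricSpace X] [CompactSpace X] [ConnectedSpace X]
    [LocallyConnectedSpace X] [Nonempty X]
    (hcut : ¬ ({x : X | IsCutPoint x}).Countable) :
    ∃ (L R : Set X) (Xs : List Bool → Set X) (l r : X) (ls rs : List Bool → X)
      (C : Set X) (h : (ℕ → Bool) ≃ₜ C),
      -- L, R, X_s are nondegenerate Peano subcontinua
      (IsCompact L ∧ IsConnected L ∧ L.Nontrivial ∧ LocallyConnectedSpace L) ∧
      (IsCompact R ∧ IsConnected R ∧ R.Nontrivial ∧ LocallyConnectedSpace R) ∧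
      (∀ s, IsCompact (Xs s) ∧ IsConnected (Xs s) ∧ (Xs s).Nontrivial ∧
        LocallyConnectedSpace (Xs s)) ∧
      -- pairwise disjointness
      Disjoint L R ∧ (∀ s, Disjoint L (Xs s)) ∧ (∀ s, Disjoint R (Xs s)) ∧
      (∀ s t, s ≠ t → Disjoint (Xs s) (Xs t)) ∧
      -- intersections with the Cantor set C
      L ∩ C = {l} ∧ R ∩ C = {r} ∧ (∀ s, Xs s ∩ C = {ls s, rs s}) ∧
      -- the homeomorphism h sends the prescribed sequences to the prescribed points
      ((h fun _ => false : C) : X) = l ∧ ((h fun _ => true : C) : X) = r ∧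
      (∀ s, ((h (catSeq (s ++ [true]) fun _ => false) : C) : X) = rs s) ∧
      (∀ s, ((h (catSeq (s ++ [false]) fun _ => true) : C) : X) = ls s) ∧
      -- the decomposition of X
      L ∪ R ∪ C ∪ (⋃ s, Xs s) = Set.univ := by
  let z : ℕ → X := TopologicalSpace.denseSeq X
  have hz : DenseRange z := TopologicalSpace.denseRange_denseSeq X
  obtain ⟨E, U, V, hE, hEunc, hUne, hVne⟩ := exists_isSeparationChain hz hcut
  obtain ⟨P, hPE, hP, hne, hV, hU⟩ := hE.exists_subset_not_adjacent hz hEunc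
  obtain ⟨a, b, l, r, h, hzc⟩ := (hE.mono hPE).exists_isGapScheme hz hP hne hV hU
  obtain ⟨g, hgc, hginj, hg⟩ :=
    h.exists_branch_map (h.exists_iInter_cell_eq_singleton hz hzc)
  have hsa := h.chain.sep _ (h.a_mem [])
  have hsb := h.chain.sep _ (h.b_mem [])
  have hab : a [] ∈ U (b []) := h.a_lt_b []
  have hgfalse : g (fun _ => false) = a [] :=
    ((hg _ _).1 (h.a_mem_cell_res (f := fun _ => false) (m := 0) fun _ _ => rfl)).symm
  have hgtrue : g (fun _ => true) = b [] :=
    ((hg _ _).1 (h.b_mem_cell_res (f := fun _ => true) (m := 0) fun _ _ => rfl)).symm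
  have hgr : ∀ s, g (catSeq (s ++ [true]) fun _ => false) = r s.reverse := fun s =>
    ((hg _ _).1 (h.r_mem_cell_res s)).symm
  have hgl : ∀ s, g (catSeq (s ++ [false]) fun _ => true) = l s.reverse := fun s =>
    ((hg _ _).1 (h.l_mem_cell_res s)).symm
  have hgap : ∀ s : List Bool, (U (l s.reverse) ∪ V (r s.reverse))ᶜ ⊆ V (a []) ∩ U (b []) :=
    fun s => (h.gap_subset _).trans (h.open_subset_open_nil _)
  obtain ⟨hLc, hLconn, hLloc⟩ := hsa.symm.isPeano_compl_left
  obtain ⟨hRc, hRconn, hRloc⟩ := hsb.isPeano_compl_left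
  refine ⟨(V (a []))ᶜ, (U (b []))ᶜ, fun s => (U (l s.reverse) ∪ V (r s.reverse))ᶜ, a [], b [],
    fun s => l s.reverse, fun s => r s.reverse, range g,
    (hgc.isClosedEmbedding hginj).isEmbedding.toHomeomorph, ⟨hLc, hLconn, ?_, hLloc⟩,
    ⟨hRc, hRconn, ?_, hRloc⟩, fun s => ?_, ?_, fun s => ?_, fun s => ?_, fun s t hst => ?_,
    ?_, ?_, fun s => ?_, hgfalse, hgtrue, hgr, hgl, ?_⟩
  · obtain ⟨p, hp⟩ := hUne _ (hPE (h.a_mem []))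
    exact ⟨p, hsa.notMem_right_of_mem_left hp, a [], hsa.notMem_right,
      fun heq => hsa.notMem_left (heq ▸ hp)⟩
  · obtain ⟨q, hq⟩ := hVne _ (hPE (h.b_mem []))
    exact ⟨q, hsb.notMem_left_of_mem_right hq, b [], hsb.notMem_left,
      fun heq => hsb.notMem_right (heq ▸ hq)⟩
  · obtain ⟨hc, hconn, hloc⟩ :=
      h.chain.isPeano_between (h.l_mem s.reverse) (h.r_mem s.reverse) (h.l_lt_r s.reverse)
    refine ⟨hc, hconn, ⟨l s.reverse, h.l_mem_gap _, r s.reverse, h.r_mem_gap _, fun heq => ?_⟩,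
      hloc⟩
    have hlt := h.l_lt_r s.reverse
    rw [heq] at hlt
    exact (h.chain.sep _ (h.r_mem s.reverse)).notMem_left hlt
  · rw [disjoint_compl_left_iff_subset, hsb.symm.compl_right]
    refine insert_subset ((h.chain.mem_iff _ (h.a_mem []) _ (h.b_mem [])).1 hab) ?_
    exact h.chain.right_subset _ (h.a_mem []) _ (h.b_mem []) hab
  · exact disjoint_compl_left_iff_subset.2 ((hgap s).trans inter_subset_left)
  · exact disjoint_compl_left_iff_subset.2 ((hgap s).trans inter_subset_right)
  · exact h.gap_disjoint fun heq => hst (List.reverse_injective heq)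
  · refine Subset.antisymm ?_ (singleton_subset_iff.2 ⟨hsa.notMem_right, _, hgfalse⟩)
    rintro _ ⟨hy, f, rfl⟩
    exact hsa.eq_of_notMem (fun hyU => (hg f _).2 rfl 0 (Or.inl hyU)) hy
  · refine Subset.antisymm ?_ (singleton_subset_iff.2 ⟨hsb.notMem_left, _, hgtrue⟩)
    rintro _ ⟨hy, f, rfl⟩
    exact hsb.eq_of_notMem hy fun hyV => (hg f _).2 rfl 0 (Or.inr hyV)
  · refine Subset.antisymm ?_ (insert_subset ⟨h.l_mem_gap _, _, hgl s⟩
      (singleton_subset_iff.2 ⟨h.r_mem_gap _, _, hgr s⟩))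
    rintro _ ⟨hy, f, rfl⟩
    exact h.eq_of_mem_gap_of_mem_cell_res hy ((hg f _).2 rfl)
  · refine eq_univ_of_forall fun y => ?_
    by_contra hy
    simp only [mem_union, mem_iUnion, not_or, not_exists, notMem_compl_iff] at hy
    obtain ⟨⟨⟨hyL, hyR⟩, hyC⟩, hyX⟩ := hy
    obtain ⟨f, hf⟩ := h.exists_branch_of_notMem_gap ⟨hyL, hyR⟩ fun σ => by
      simpa [or_iff_not_imp_left] using hyX σ.reverse
    exact hyC ⟨f, ((hg f y).1 hf).symm⟩
end

section
/- Let X be a Peano continuum, let S be a simple closed curve (a space homeomorphic to the circle), and let p : X → S be a continuous surjection such that only countably many points of S have a preimage containing more than one point. Then for every ε > 0 there is a finite set K ⊆ S such that diam p^{-1}(L) < ε for every connected component L of S \ K. -/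
open Set Filter Topology

/-- If `z` is a cluster point of the preimages of the arcs to the right of `a`, then the image of
every neighbourhood of `z` contains an arc to the right of `a`. -/
lemma exists_image_Ioo_subset_of_clusterPt {X : Type*} [TopologicalSpace X]
    [LocallyConnectedSpace X] {q : X → AddCircle (1 : ℝ)} (hq : Continuous q) {a : ℝ} {z : X}
    (hz : ClusterPt z (comap q (map (fun t : ℝ => (t : AddCircle (1 : ℝ))) (𝓝[>] a))))
    {O : Set X} (hO : O ∈ 𝓝 z) :
    ∃ b > a, (fun t : ℝ => (t : AddCircle (1 : ℝ))) '' Ioo a b ⊆ q '' O := by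
  have hcoe : Continuous (fun t : ℝ => (t : AddCircle (1 : ℝ))) := AddCircle.continuous_mk' 1
  have hqz : q z = (a : AddCircle (1 : ℝ)) := by
    have h := hz.map hq.continuousAt tendsto_comap
    have h' : ClusterPt (q z) (𝓝 (a : AddCircle (1 : ℝ))) :=
      h.mono ((hcoe.tendsto a).mono_left nhdsWithin_le_nhds)
    exact eq_of_nhds_neBot h'
  have : Fact ((0 : ℝ) < 1) := ⟨one_pos⟩
  set e := AddCircle.openPartialHomeomorphCoe (1 : ℝ) (a - 1 / 2)
  have hsource : e.source = Ioo (a - 1 / 2) (a - 1 / 2 + 1) := rfl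
  have he_coe : ∀ t : ℝ, e t = (t : AddCircle (1 : ℝ)) := fun _ => rfl
  have ha : a ∈ e.source := by rw [hsource]; constructor <;> linarith
  have hU : q ⁻¹' e.target ∈ 𝓝 z := by
    refine (e.open_target.preimage hq).mem_nhds ?_
    rw [mem_preimage, hqz, ← he_coe]
    exact e.map_source ha
  obtain ⟨V, hVsub, hVopen, hzV, hVconn⟩ :=
    locallyConnectedSpace_iff_subsets_isOpen_isConnected.1 ‹_› z _ (inter_mem hO hU)
  have hF : q ⁻¹' ((fun t : ℝ => (t : AddCircle (1 : ℝ))) '' Ioo a (a + 1 / 2)) ∈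
      comap q (map (fun t : ℝ => (t : AddCircle (1 : ℝ))) (𝓝[>] a)) :=
    preimage_mem_comap (image_mem_map (Ioo_mem_nhdsGT (by linarith)))
  obtain ⟨w, hwV, t, ht, htw⟩ :=
    clusterPt_iff_nonempty.1 hz (hVopen.mem_nhds hzV) hF
  have hconn : IsPreconnected ((fun x => e.symm (q x)) '' V) :=
    hVconn.isPreconnected.image _
      (e.continuousOn_symm.comp hq.continuousOn fun x hx => (hVsub hx).2)
  have haV : a ∈ (fun x => e.symm (q x)) '' V :=
    ⟨z, hzV, by simp only [hqz]; rw [← he_coe]; exact e.left_inv ha⟩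
  have htV : t ∈ (fun x => e.symm (q x)) '' V := by
    refine ⟨w, hwV, ?_⟩
    simp only [← htw]
    rw [← he_coe]
    refine e.left_inv ?_
    rw [hsource]
    constructor <;> linarith [ht.1, ht.2]
  refine ⟨t, ht.1, ?_⟩
  rintro _ ⟨s, hs, rfl⟩
  obtain ⟨v, hvV, hvs⟩ := hconn.Icc_subset haV htV (Ioo_subset_Icc_self hs)
  refine ⟨v, (hVsub hvV).1, ?_⟩
  simp only [← hvs]
  rw [← he_coe]
  exact (e.right_inv (hVsub hvV).2).symm

/-- Short arcs to the right of `a` have small preimages. -/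
lemma exists_diam_preimage_Ioo_right_lt {X : Type*} [MetricSpace X] [CompactSpace X]
    [LocallyConnectedSpace X] {q : X → AddCircle (1 : ℝ)} (hq : Continuous q)
    (hcount : {y | (q ⁻¹' {y}).Nontrivial}.Countable) (a : ℝ) {ε : ℝ} (hε : 0 < ε) :
    ∃ b > a, Metric.diam (q ⁻¹' ((fun t : ℝ => (t : AddCircle (1 : ℝ))) '' Ioo a b)) < ε := by
  have : Fact ((0 : ℝ) < 1) := ⟨one_pos⟩
  set F := comap q (map (fun t : ℝ => (t : AddCircle (1 : ℝ))) (𝓝[>] a))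
  have hunique : ∀ z w, ClusterPt z F → ClusterPt w F → z = w := by
    intro z w hz hw
    by_contra hne
    obtain ⟨V, W, hV, hW, hzV, hwW, hVW⟩ := t2_separation hne
    obtain ⟨b, hb, hbV⟩ := exists_image_Ioo_subset_of_clusterPt hq hz (hV.mem_nhds hzV)
    obtain ⟨c, hc, hcW⟩ := exists_image_Ioo_subset_of_clusterPt hq hw (hW.mem_nhds hwW)
    set d := min (min b c) (a + 1) with hd
    have had : a < d := by simp [hd, hb.lt, hc.lt]
    have hsub : (fun t : ℝ => (t : AddCircle (1 : ℝ))) '' Ioo a d ⊆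
        {y | (q ⁻¹' {y}).Nontrivial} := by
      rintro _ ⟨t, ht, rfl⟩
      obtain ⟨v, hv, hvt⟩ := hbV ⟨t, ⟨ht.1, by have := ht.2; simp [hd] at this; tauto⟩, rfl⟩
      obtain ⟨u, hu, hut⟩ := hcW ⟨t, ⟨ht.1, by have := ht.2; simp [hd] at this; tauto⟩, rfl⟩
      exact ⟨v, hvt, u, hut, hVW.ne_of_mem hv hu⟩
    have hinj : InjOn (fun t : ℝ => (t : AddCircle (1 : ℝ))) (Ioo a d) := by
      refine (AddCircle.openPartialHomeomorphCoe (1 : ℝ) a).injOn.mono ?_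
      exact Ioo_subset_Ioo_right (min_le_right _ _)
    have hIoo : (Ioo a d).Countable :=
      countable_of_injective_of_countable_image hinj (hcount.mono hsub)
    have hcard := Cardinal.le_aleph0_iff_set_countable.2 hIoo
    rw [Cardinal.mk_Ioo_real had] at hcard
    exact hcard.not_gt Cardinal.aleph0_lt_continuum
  have hsmall : ∃ s ∈ F, Metric.diam s < ε := by
    rcases F.eq_or_neBot with hbot | hne
    · exact ⟨∅, by simp [hbot], by simpa using hε⟩
    · obtain ⟨x, hx⟩ := exists_clusterPt_of_compactSpace F
      have hle : F ≤ 𝓝 x := le_nhds_of_unique_clusterPt fun y hy => hunique y x hy hx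
      refine ⟨Metric.ball x (ε / 3), hle (Metric.ball_mem_nhds x (by positivity)), ?_⟩
      have := Metric.diam_ball (x := x) (r := ε / 3) (by positivity)
      linarith
  obtain ⟨s, hs, hsε⟩ := hsmall
  obtain ⟨T, hT, hTs⟩ := hs
  obtain ⟨b, hb, hbT⟩ := mem_nhdsGT_iff_exists_Ioo_subset.1 (mem_map.1 hT)
  refine ⟨b, hb, lt_of_le_of_lt (Metric.diam_mono ?_ (Metric.isBounded_of_compactSpace)) hsε⟩
  exact (preimage_mono (image_subset_iff.2 hbT)).trans hTs

/-- Short arcs to the left of `a` have small preimages. -/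
lemma exists_diam_preimage_Ioo_left_lt {X : Type*} [MetricSpace X] [CompactSpace X]
    [LocallyConnectedSpace X] {q : X → AddCircle (1 : ℝ)} (hq : Continuous q)
    (hcount : {y | (q ⁻¹' {y}).Nontrivial}.Countable) (a : ℝ) {ε : ℝ} (hε : 0 < ε) :
    ∃ b < a, Metric.diam (q ⁻¹' ((fun t : ℝ => (t : AddCircle (1 : ℝ))) '' Ioo b a)) < ε := by
  have hcount' : {y | ((fun x => -q x) ⁻¹' {y}).Nontrivial}.Countable := by
    convert hcount.preimage (neg_injective (G := AddCircle (1 : ℝ))) using 1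
    ext y
    have : (fun x => -q x) ⁻¹' {y} = q ⁻¹' {-y} := by ext x; simp [neg_eq_iff_eq_neg]
    simp [this]
  obtain ⟨b, hb, hbε⟩ := exists_diam_preimage_Ioo_right_lt hq.neg hcount' (-a) hε
  refine ⟨-b, by linarith [hb.lt], ?_⟩
  convert hbε using 2
  ext x
  constructor
  · rintro ⟨t, ht, htx⟩
    exact ⟨-t, ⟨by linarith [ht.2], by linarith [ht.1]⟩, by simp [← htx]⟩
  · rintro ⟨t, ht, htx⟩
    refine ⟨-t, ⟨by linarith [ht.2], by linarith [ht.1]⟩, ?_⟩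
    have htx' : (t : AddCircle (1 : ℝ)) = -q x := htx
    simp [htx']

/-- A preconnected subset of the circle which meets an arc and avoids its endpoints lies in it. -/
lemma IsPreconnected.subset_image_Ioo {C : Set (AddCircle (1 : ℝ))} (hC : IsPreconnected C)
    {a b : ℝ} (ha : (a : AddCircle (1 : ℝ)) ∉ C) (hb : (b : AddCircle (1 : ℝ)) ∉ C)
    (hne : (C ∩ (fun t : ℝ => (t : AddCircle (1 : ℝ))) '' Ioo a b).Nonempty) :
    C ⊆ (fun t : ℝ => (t : AddCircle (1 : ℝ))) '' Ioo a b := by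
  have : Fact ((0 : ℝ) < 1) := ⟨one_pos⟩
  have hcoe : Continuous (fun t : ℝ => (t : AddCircle (1 : ℝ))) := AddCircle.continuous_mk' 1
  refine hC.subset_of_closure_inter_subset (QuotientAddGroup.isOpenMap_coe _ isOpen_Ioo) hne ?_
  rintro y ⟨hy, hyC⟩
  obtain ⟨t, ht, rfl⟩ := closure_minimal (image_mono Ioo_subset_Icc_self)
    (isCompact_Icc.image hcoe).isClosed hy
  refine ⟨t, ⟨lt_of_le_of_ne ht.1 ?_, lt_of_le_of_ne ht.2 ?_⟩, rfl⟩
  · rintro rfl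
    exact ha hyC
  · rintro rfl
    exact hb hyC

/-- The main theorem for maps into the standard circle. -/
lemma exists_finset_diam_preimage_lt {X : Type*} [MetricSpace X] [CompactSpace X]
    [LocallyConnectedSpace X] {q : X → AddCircle (1 : ℝ)} (hq : Continuous q)
    (hcount : {y | (q ⁻¹' {y}).Nontrivial}.Countable) {ε : ℝ} (hε : 0 < ε) :
    ∃ K : Finset (AddCircle (1 : ℝ)), ∀ C : Set (AddCircle (1 : ℝ)), IsPreconnected C →
      C.Nonempty → C ⊆ (K : Set (AddCircle (1 : ℝ)))ᶜ → Metric.diam (q ⁻¹' C) < ε := by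
  classical
  have : Fact ((0 : ℝ) < 1) := ⟨one_pos⟩
  choose r hr hrε using fun a : ℝ => exists_diam_preimage_Ioo_right_lt hq hcount a hε
  choose l hl hlε using fun a : ℝ => exists_diam_preimage_Ioo_left_lt hq hcount a hε
  obtain ⟨A, hA⟩ := isCompact_univ.elim_finite_subcover
    (fun a : ℝ => (fun t : ℝ => (t : AddCircle (1 : ℝ))) '' Ioo (l a) (r a))
    (fun a => QuotientAddGroup.isOpenMap_coe _ isOpen_Ioo) (by
      rintro y -
      obtain ⟨a, rfl⟩ := QuotientAddGroup.mk_surjective y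
      exact mem_iUnion.2 ⟨a, a, ⟨hl a, hr a⟩, rfl⟩)
  let K : Finset (AddCircle (1 : ℝ)) :=
    A.biUnion fun a => {(a : AddCircle (1 : ℝ)), (l a : AddCircle (1 : ℝ)),
      (r a : AddCircle (1 : ℝ))}
  refine ⟨K, fun C hC hCne hCK => ?_⟩
  obtain ⟨y, hy⟩ := hCne
  obtain ⟨a, haA, t, ht, hty⟩ := mem_iUnion₂.1 (hA (mem_univ y))
  have hnot : ∀ s : ℝ, s = a ∨ s = l a ∨ s = r a → (s : AddCircle (1 : ℝ)) ∉ C := by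
    intro s hs hsC
    refine hCK hsC (Finset.mem_coe.2 (Finset.mem_biUnion.2 ⟨a, haA, ?_⟩))
    rcases hs with rfl | rfl | rfl <;> simp
  have hsmall : ∀ s : Set (AddCircle (1 : ℝ)), C ⊆ s → Metric.diam (q ⁻¹' s) < ε →
      Metric.diam (q ⁻¹' C) < ε := fun s hs hsε =>
    (Metric.diam_mono (preimage_mono hs) Metric.isBounded_of_compactSpace).trans_lt hsε
  rcases lt_trichotomy t a with hta | rfl | hat
  · exact hsmall _ (hC.subset_image_Ioo (hnot _ (by simp)) (hnot _ (by simp))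
      ⟨y, hy, t, ⟨ht.1, hta⟩, hty⟩) (hlε a)
  · subst hty
    exact absurd hy (hnot t (by simp))
  · exact hsmall _ (hC.subset_image_Ioo (hnot _ (by simp)) (hnot _ (by simp))
      ⟨y, hy, t, ⟨hat, ht.2⟩, hty⟩) (hrε a)

/-- Let `p : X → S` be a continuous surjection from a Peano continuum onto a simple
closed curve such that only countably many points of `S` have nondegenerate preimage.
Then for every `ε > 0` there is a finite set `K ⊆ S` such that the preimage of every
connected component of `S \ K` has diameter less than `ε`. -/
theorem exists_finite_set_with_small_preimages_of_components
    {X : Type*} [MetricSpace X] [CompactSpace X] [ConnectedSpace X]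
    [LocallyConnectedSpace X] [Nonempty X]
    {S : Type*} [TopologicalSpace S] (hS : Nonempty (S ≃ₜ AddCircle (1 : ℝ)))
    (p : X → S) (hp : Continuous p) (hsurj : Function.Surjective p)
    (hcount : ({y : S | (p ⁻¹' {y}).Nontrivial}).Countable)
    (ε : ℝ) (hε : 0 < ε) :
    ∃ K : Finset S, ∀ y ∈ ((K : Set S))ᶜ,
      Metric.diam (p ⁻¹' connectedComponentIn ((K : Set S))ᶜ y) < ε := by
  obtain ⟨h⟩ := hS
  have hcount' : {y | ((fun x => h (p x)) ⁻¹' {y}).Nontrivial}.Countable := by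
    convert hcount.preimage h.symm.injective using 1
    ext y
    have : (fun x => h (p x)) ⁻¹' {y} = p ⁻¹' {h.symm y} := by
      ext x
      simp [← h.symm_apply_eq, eq_comm]
    simp [this]
  obtain ⟨K, hK⟩ := exists_finset_diam_preimage_lt (h.continuous.comp hp) hcount' hε
  refine ⟨K.map h.symm.toEquiv.toEmbedding, fun y hy => ?_⟩
  have hC := hK (h '' connectedComponentIn
      ((K.map h.symm.toEquiv.toEmbedding : Finset S) : Set S)ᶜ y)
    (isPreconnected_connectedComponentIn.image _ h.continuous.continuousOn)
    ⟨h y, y, mem_connectedComponentIn hy, rfl⟩ (by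
      rintro _ ⟨s, hs, rfl⟩ hsK
      exact connectedComponentIn_subset _ _ hs
        (Finset.mem_coe.2 (Finset.mem_map.2 ⟨h s, hsK, by simp⟩)))
  rwa [preimage_comp, preimage_image_eq _ h.injective] at hC
end
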